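/- Let (𝛑, 𝛍) be a Graphon Mean Field Equilibrium with α ↦ π^α Lipschitz continuous up to finitely many discontinuities. Under Assumptions (W) and (Lip), for any ε, p > 0 there exists N' such that for all N > N', the N-agent policy tuple (π¹,…,π^N) = Γ_N(𝛑) is an (ε,p)-Markov–Nash equilibrium: J^N_i(π¹,…,π^N) ≥ max_{π∈Π} J^N_i(π¹,…,π^{i−1},π,π^{i+1},…,π^N) − ε for all i in some set 𝒲_N ⊆ 𝒱_N with |𝒲_N| ≥ ⌊(1−p)N⌋. -/

import Mathlib

open MeasureTheory Filter
open scoped BigOperators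

namespace GMFG

variable {𝒳 𝒰 : Type*}

/-- The probability simplex 𝒫(𝒳) on a finite set, as probability mass functions. -/
def simplex (𝒳 : Type*) [Fintype 𝒳] : Set (𝒳 → ℝ) :=
  {p | (∀ x, 0 ≤ p x) ∧ ∑ x, p x = 1}

/-- The set ℬ₁(𝒳) of (sub-probability) measures with total mass at most 1,
as mass functions. -/
def subProb (𝒳 : Type*) [Fintype 𝒳] : Set (𝒳 → ℝ) :=
  {p | (∀ x, 0 ≤ p x) ∧ ∑ x, p x ≤ 1}

/-- L¹ distance between measures on a finite set. -/
noncomputable def l1dist [Fintype 𝒳] (ν ν' : 𝒳 → ℝ) : ℝ := ∑ x, |ν x - ν' x|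

/-- Markovian feedback policies π ∈ Π = 𝒫(𝒰)^{𝒯×𝒳}. -/
def IsPolicy [Fintype 𝒰] (π : ℕ → 𝒳 → 𝒰 → ℝ) : Prop :=
  ∀ t x, (∀ u, 0 ≤ π t x u) ∧ ∑ u, π t x u = 1

/-- P : 𝒳×𝒰×ℬ₁(𝒳) → 𝒫(𝒳) is a transition kernel. -/
def IsKernel [Fintype 𝒳] [Fintype 𝒰] (P : 𝒳 → 𝒰 → (𝒳 → ℝ) → 𝒳 → ℝ) : Prop :=
  ∀ x u ν, ν ∈ subProb 𝒳 → P x u ν ∈ simplex 𝒳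

/-- Lipschitz continuity of the transition kernel w.r.t. the L¹ norm. -/
def KernelLipschitz [Fintype 𝒳] [Fintype 𝒰] (P : 𝒳 → 𝒰 → (𝒳 → ℝ) → 𝒳 → ℝ) (L : ℝ) : Prop :=
  ∀ x u ν ν', ν ∈ subProb 𝒳 → ν' ∈ subProb 𝒳 → l1dist (P x u ν) (P x u ν') ≤ L * l1dist ν ν'

/-- Lipschitz continuity of the reward w.r.t. the L¹ norm. -/
def RewardLipschitz [Fintype 𝒳] [Fintype 𝒰] (r : 𝒳 → 𝒰 → (𝒳 → ℝ) → ℝ) (L : ℝ) : Prop :=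
  ∀ x u ν ν', ν ∈ subProb 𝒳 → ν' ∈ subProb 𝒳 → |r x u ν - r x u ν'| ≤ L * l1dist ν ν'

/-- A graphon: symmetric, measurable, [0,1]-valued. -/
def IsGraphon (W : ℝ → ℝ → ℝ) : Prop :=
  Measurable (Function.uncurry W) ∧ (∀ a b, W a b = W b a) ∧ ∀ a b, W a b ∈ Set.Icc (0:ℝ) 1

/-- Lipschitz continuity of a graphon on [0,1]². -/
def GraphonLipschitz (W : ℝ → ℝ → ℝ) (L : ℝ) : Prop :=
  ∀ a b a' b' : ℝ, a ∈ Set.Icc (0:ℝ) 1 → b ∈ Set.Icc (0:ℝ) 1 → a' ∈ Set.Icc (0:ℝ) 1 →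
    b' ∈ Set.Icc (0:ℝ) 1 → |W a b - W a' b'| ≤ L * (|a - a'| + |b - b'|)

/-- The neighborhood mean field 𝔾^α = ∫₀¹ W(α,β) ν^β dβ of a state marginal ensemble ν. -/
noncomputable def nbhd [Fintype 𝒳] (W : ℝ → ℝ → ℝ) (ν : ℝ → 𝒳 → ℝ) (α : ℝ) : 𝒳 → ℝ :=
  fun x => ∫ β in Set.Ioc (0:ℝ) 1, W α β * ν β x

/-- 𝛍 = Ψ(𝛑): the (measurable) mean field ensemble generated by the policy ensemble 𝛑,
via μ^α_0 = μ₀ and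
μ^α_{t+1}(x') = Σ_{x,u} μ^α_t(x) π^α_t(u|x) P(x'|x,u,𝔾^α_t). -/
def IsMeanFieldOf [Fintype 𝒳] [Fintype 𝒰] (W : ℝ → ℝ → ℝ) (P : 𝒳 → 𝒰 → (𝒳 → ℝ) → 𝒳 → ℝ)
    (μ0 : 𝒳 → ℝ) (πe : ℝ → ℕ → 𝒳 → 𝒰 → ℝ) (μ : ℕ → ℝ → 𝒳 → ℝ) : Prop :=
  (∀ t x, Measurable fun α => μ t α x) ∧
  (∀ α ∈ Set.Icc (0:ℝ) 1, μ 0 α = μ0) ∧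
  ∀ t : ℕ, ∀ α ∈ Set.Icc (0:ℝ) 1, ∀ x' : 𝒳,
    μ (t+1) α x' = ∑ x, μ t α x * ∑ u, πe α t x u * P x u (nbhd W (μ t) α) x'

/-- The law of the state of a single mean field agent with neighborhood mean field
G and policy π: X_0 ∼ μ₀, U_t ∼ π_t(·|X_t), X_{t+1} ∼ P(·|X_t,U_t,G_t). -/
noncomputable def stateLaw [Fintype 𝒳] [Fintype 𝒰] (P : 𝒳 → 𝒰 → (𝒳 → ℝ) → 𝒳 → ℝ)
    (μ0 : 𝒳 → ℝ) (G : ℕ → 𝒳 → ℝ) (π : ℕ → 𝒳 → 𝒰 → ℝ) : ℕ → 𝒳 → ℝ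
  | 0 => μ0
  | (t+1) => fun x' => ∑ x, stateLaw P μ0 G π t x * ∑ u, π t x u * P x u (G t) x'

/-- Mean field objective J(π) = E[Σ_{t<T} r(X_t,U_t,G_t)] of a single agent whose
neighborhood mean field is G. -/
noncomputable def Jmf [Fintype 𝒳] [Fintype 𝒰] (T : ℕ) (r : 𝒳 → 𝒰 → (𝒳 → ℝ) → ℝ)
    (P : 𝒳 → 𝒰 → (𝒳 → ℝ) → 𝒳 → ℝ) (μ0 : 𝒳 → ℝ) (G : ℕ → 𝒳 → ℝ) (π : ℕ → 𝒳 → 𝒰 → ℝ) : ℝ :=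
  ∑ t ∈ Finset.range T, ∑ x, stateLaw P μ0 G π t x * ∑ u, π t x u * r x u (G t)

/-- A Graphon Mean Field Equilibrium: a measurable policy ensemble 𝛑 and mean field
ensemble 𝛍 with 𝛍 = Ψ(𝛑) and π^α optimal for J^𝛍_α for every α ∈ [0,1]. -/
def IsGMFE [Fintype 𝒳] [Fintype 𝒰] (T : ℕ) (W : ℝ → ℝ → ℝ) (P : 𝒳 → 𝒰 → (𝒳 → ℝ) → 𝒳 → ℝ)
    (r : 𝒳 → 𝒰 → (𝒳 → ℝ) → ℝ) (μ0 : 𝒳 → ℝ)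
    (πe : ℝ → ℕ → 𝒳 → 𝒰 → ℝ) (μ : ℕ → ℝ → 𝒳 → ℝ) : Prop :=
  (∀ t x u, Measurable fun α => πe α t x u) ∧
  (∀ α ∈ Set.Icc (0:ℝ) 1, IsPolicy (πe α)) ∧
  IsMeanFieldOf W P μ0 πe μ ∧
  ∀ α ∈ Set.Icc (0:ℝ) 1, ∀ π' : ℕ → 𝒳 → 𝒰 → ℝ, IsPolicy π' →
    Jmf T r P μ0 (fun t => nbhd W (μ t) α) π' ≤ Jmf T r P μ0 (fun t => nbhd W (μ t) α) (πe α)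

/-- α ↦ π^α is Lipschitz continuous up to a finite set D of discontinuities. -/
def EnsembleLipschitzUpTo [Fintype 𝒳] [Fintype 𝒰] (πe : ℝ → ℕ → 𝒳 → 𝒰 → ℝ) : Prop :=
  ∃ (L : ℝ) (D : Finset ℝ), ∀ (t : ℕ) (x : 𝒳) (u : 𝒰),
    ∀ α ∈ Set.Icc (0:ℝ) 1, ∀ β ∈ Set.Icc (0:ℝ) 1,
      (∀ d ∈ D, d ∉ Set.uIcc α β) → |πe α t x u - πe β t x u| ≤ L * |α - β|

/-- Edge indicators of a simple (undirected) graph. -/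
def IsEdgeWeights {N : ℕ} (ξ : Fin N → Fin N → ℝ) : Prop :=
  (∀ i j, ξ i j = 0 ∨ ξ i j = 1) ∧ ∀ i j, ξ i j = ξ j i

/-- Empirical neighborhood mean field 𝔾ⁱ = (1/N) Σ_j ξ_{ij} δ_{X^j}. -/
noncomputable def empNbhd [Fintype 𝒳] [DecidableEq 𝒳] {N : ℕ} (ξ : Fin N → Fin N → ℝ)
    (X : Fin N → 𝒳) (i : Fin N) : 𝒳 → ℝ :=
  fun x => (N : ℝ)⁻¹ * ∑ j, ξ i j * (if X j = x then 1 else 0)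

/-- The joint law of the N agents' states at time t: X^i_0 ∼ μ₀ i.i.d.,
U^i_t ∼ π^i_t(·|X^i_t), X^i_{t+1} ∼ P(·|X^i_t,U^i_t,𝔾^i_t) conditionally independently. -/
noncomputable def jointLaw [Fintype 𝒳] [DecidableEq 𝒳] [Fintype 𝒰] {N : ℕ}
    (P : 𝒳 → 𝒰 → (𝒳 → ℝ) → 𝒳 → ℝ) (μ0 : 𝒳 → ℝ) (ξ : Fin N → Fin N → ℝ)
    (πs : Fin N → ℕ → 𝒳 → 𝒰 → ℝ) : ℕ → (Fin N → 𝒳) → ℝ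
  | 0 => fun X => ∏ i, μ0 (X i)
  | (t+1) => fun Y => ∑ X : Fin N → 𝒳, jointLaw P μ0 ξ πs t X *
      ∏ i, ∑ u, πs i t (X i) u * P (X i) u (empNbhd ξ X i) (Y i)

/-- The objective J^N_i = E[Σ_{t<T} r(X^i_t,U^i_t,𝔾^i_t)] of agent i in the N-agent game. -/
noncomputable def JN [Fintype 𝒳] [DecidableEq 𝒳] [Fintype 𝒰] {N : ℕ} (T : ℕ)
    (r : 𝒳 → 𝒰 → (𝒳 → ℝ) → ℝ) (P : 𝒳 → 𝒰 → (𝒳 → ℝ) → 𝒳 → ℝ) (μ0 : 𝒳 → ℝ)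
    (ξ : Fin N → Fin N → ℝ) (πs : Fin N → ℕ → 𝒳 → 𝒰 → ℝ) (i : Fin N) : ℝ :=
  ∑ t ∈ Finset.range T, ∑ X : Fin N → 𝒳, jointLaw P μ0 ξ πs t X *
    ∑ u, πs i t (X i) u * r (X i) u (empNbhd ξ X i)

/-- Γ_N(𝛑) = (π^{1/N},…,π^{N/N}) (agent i : Fin N has graphon index (i+1)/N). -/
noncomputable def gammaN (πe : ℝ → ℕ → 𝒳 → 𝒰 → ℝ) (N : ℕ) : Fin N → ℕ → 𝒳 → 𝒰 → ℝ :=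
  fun i => πe ((((i : ℕ) : ℝ) + 1) / N)

/-- The step graphon W_N of a finite graph: W_N(x,y) = ξ_{⌈Nx⌉,⌈Ny⌉}. -/
noncomputable def stepGraphon {N : ℕ} (ξ : Fin N → Fin N → ℝ) : ℝ → ℝ → ℝ := fun a b =>
  ∑ i : Fin N, ∑ j : Fin N,
    (if ((i : ℕ) : ℝ) / N < a ∧ a ≤ (((i : ℕ) : ℝ) + 1) / N then 1 else 0) *
    (if ((j : ℕ) : ℝ) / N < b ∧ b ≤ (((j : ℕ) : ℝ) + 1) / N then 1 else 0) * ξ i j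

/-- Assumption (W): ‖W_N − W‖_{L∞→L1} → 0, i.e.
sup_{‖g‖∞ ≤ 1} ∫₀¹ |∫₀¹ (W_N(α,β) − W(α,β)) g(β) dβ| dα → 0. -/
def OpConvergesTo (WN : (N : ℕ) → ℝ → ℝ → ℝ) (W : ℝ → ℝ → ℝ) : Prop :=
  ∀ ε > (0:ℝ), ∃ N₀ : ℕ, ∀ N ≥ N₀, ∀ g : ℝ → ℝ, Measurable g → (∀ β, |g β| ≤ 1) →
    (∫ α in Set.Ioc (0:ℝ) 1, |∫ β in Set.Ioc (0:ℝ) 1, (WN N α β - W α β) * g β|) ≤ ε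

/-- ‖W_N − W‖_{L∞→L1} = O(1/√N). -/
def OpRateSqrt (WN : (N : ℕ) → ℝ → ℝ → ℝ) (W : ℝ → ℝ → ℝ) : Prop :=
  ∃ C : ℝ, ∀ N : ℕ, 1 ≤ N → ∀ g : ℝ → ℝ, Measurable g → (∀ β, |g β| ≤ 1) →
    (∫ α in Set.Ioc (0:ℝ) 1, |∫ β in Set.Ioc (0:ℝ) 1, (WN N α β - W α β) * g β|) ≤ C / Real.sqrt N

/-- 𝛍^N_t(f) = ∫₀¹ f(X^{⌈Nα⌉}, α) dα, the integral of f against the random empirical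
step measure ensemble. -/
noncomputable def empInt [Fintype 𝒳] {N : ℕ} (f : 𝒳 → ℝ → ℝ) (X : Fin N → 𝒳) : ℝ :=
  ∑ i : Fin N, ∫ α in Set.Ioc (((i : ℕ) : ℝ) / N) ((((i : ℕ) : ℝ) + 1) / N), f (X i) α

/-- 𝛍_t(f) = ∫₀¹ Σ_x f(x,α) μ^α_t(x) dα. -/
noncomputable def mfInt [Fintype 𝒳] (f : 𝒳 → ℝ → ℝ) (ν : ℝ → 𝒳 → ℝ) : ℝ :=
  ∫ α in Set.Ioc (0:ℝ) 1, ∑ x, f x α * ν α x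

/-- The representative α_m = (m+1)/M of the m-th equivalence class Ĩ_m = (m/M,(m+1)/M]. -/
noncomputable def rep (M : ℕ) (m : Fin M) : ℝ := (((m : ℕ) : ℝ) + 1) / M

/-- Discretized neighborhood mean field 𝔾̂^{α_m} = (1/M) Σ_n W(α_m,α_n) ν^{α_n}. -/
noncomputable def approxNbhd [Fintype 𝒳] {M : ℕ} (W : ℝ → ℝ → ℝ) (ν : Fin M → 𝒳 → ℝ)
    (m : Fin M) : 𝒳 → ℝ :=
  fun x => (M : ℝ)⁻¹ * ∑ n, W (rep M m) (rep M n) * ν n x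

/-- The approximate mean field μ̂ = Ψ̂(𝛑) of the M equivalence classes method. -/
noncomputable def approxMF [Fintype 𝒳] [Fintype 𝒰] {M : ℕ} (W : ℝ → ℝ → ℝ)
    (P : 𝒳 → 𝒰 → (𝒳 → ℝ) → 𝒳 → ℝ) (μ0 : 𝒳 → ℝ) (πm : Fin M → ℕ → 𝒳 → 𝒰 → ℝ) :
    ℕ → Fin M → 𝒳 → ℝ
  | 0 => fun _ => μ0
  | (t+1) => fun m x' => ∑ x, approxMF W P μ0 πm t m x *
      ∑ u, πm m t x u * P x u (approxNbhd W (approxMF W P μ0 πm t) m) x'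

/-- A solution (𝛑, 𝛍) of the M equivalence classes method: 𝛑 is determined by policies
π^{α_m} (one per class), each optimal for the generated approximate mean field 𝛍 = Ψ̂(𝛑). -/
def IsEqClassSolution [Fintype 𝒳] [Fintype 𝒰] (T : ℕ) {M : ℕ} (W : ℝ → ℝ → ℝ)
    (P : 𝒳 → 𝒰 → (𝒳 → ℝ) → 𝒳 → ℝ) (r : 𝒳 → 𝒰 → (𝒳 → ℝ) → ℝ) (μ0 : 𝒳 → ℝ)
    (πm : Fin M → ℕ → 𝒳 → 𝒰 → ℝ) : Prop :=
  (∀ m, IsPolicy (πm m)) ∧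
  ∀ m, ∀ π' : ℕ → 𝒳 → 𝒰 → ℝ, IsPolicy π' →
    Jmf T r P μ0 (fun t => approxNbhd W (approxMF W P μ0 πm t) m) π'
      ≤ Jmf T r P μ0 (fun t => approxNbhd W (approxMF W P μ0 πm t) m) (πm m)

/-- The optimal action value function Q with k steps to go from time t,
Q(t,x,u) = r(x,u,G_t) + Σ_{x'} P(x'|x,u,G_t) max_{u'} Q(t+1,x',u'). -/
noncomputable def Qfun [Fintype 𝒳] [Fintype 𝒰] [Nonempty 𝒰] (r : 𝒳 → 𝒰 → (𝒳 → ℝ) → ℝ)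
    (P : 𝒳 → 𝒰 → (𝒳 → ℝ) → 𝒳 → ℝ) (G : ℕ → 𝒳 → ℝ) : ℕ → ℕ → 𝒳 → 𝒰 → ℝ
  | 0 => fun _ _ _ => 0
  | (k+1) => fun t x u => r x u (G t) + ∑ x', P x u (G t) x' *
      Finset.univ.sup' Finset.univ_nonempty (fun u' => Qfun r P G k (t+1) x' u')

/-- The Boltzmann (softmax) policy Φ̂_η(𝛍) of the M equivalence classes method with
horizon T, temperature η and block mean field ν. -/
noncomputable def boltzmann [Fintype 𝒳] [Fintype 𝒰] [Nonempty 𝒰] (T : ℕ) (η : ℝ)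
    (r : 𝒳 → 𝒰 → (𝒳 → ℝ) → ℝ) (P : 𝒳 → 𝒰 → (𝒳 → ℝ) → 𝒳 → ℝ) (W : ℝ → ℝ → ℝ) {M : ℕ}
    (ν : ℕ → Fin M → 𝒳 → ℝ) : Fin M → ℕ → 𝒳 → 𝒰 → ℝ :=
  fun m t x u =>
    Real.exp (Qfun r P (fun s => approxNbhd W (ν s) m) (T - t) t x u / η) /
      ∑ u' : 𝒰, Real.exp (Qfun r P (fun s => approxNbhd W (ν s) m) (T - t) t x u' / η)

/-- One step 𝛍 ↦ Ψ̂(Φ̂_η(𝛍)) of the Boltzmann fixed point iteration. -/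
noncomputable def boltzIter [Fintype 𝒳] [Fintype 𝒰] [Nonempty 𝒰] (T : ℕ) (η : ℝ)
    (r : 𝒳 → 𝒰 → (𝒳 → ℝ) → ℝ) (P : 𝒳 → 𝒰 → (𝒳 → ℝ) → 𝒳 → ℝ) (W : ℝ → ℝ → ℝ) (μ0 : 𝒳 → ℝ)
    {M : ℕ} (ν : ℕ → Fin M → 𝒳 → ℝ) : ℕ → Fin M → 𝒳 → ℝ :=
  fun t => approxMF W P μ0 (boltzmann T η r P W ν) t

/-!
For each fixed family of test functions `f j` with `|f j| ≤ 1`, the mean over the agents of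
`f j (X j)` differs from that of its expectation in the limit system, in `L¹`, by `O(1 / √N)` plus
the mean error of the deterministic neighborhood mean fields. This propagates by induction on time:
the state at time `t + 1`, conditionally on time `t`, fluctuates like independent variables around
means that are again averages of test functions of the state at time `t`. Letting one agent deviate
changes these averages by `O(1 / N)` only, so `J^N_i` is close to the limit objective of agent `i`
as soon as the deterministic error of agent `i` itself is small. Operator convergence controls the
mean of these errors over the agents, and Markov's inequality controls all but a fraction `p`.
-/

open scoped Matrix Topology

/-! ### Expectations under finite probability vectors -/

section Simplex

variable {Ω Ω' : Type*} [Fintype Ω] {p q f g : Ω → ℝ} {B : ℝ}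

lemma abs_le_one_of_mem_simplex (hp : p ∈ simplex Ω) (ω : Ω) : |p ω| ≤ 1 :=
  (abs_of_nonneg (hp.1 ω)).trans_le
    (hp.2 ▸ Finset.single_le_sum (fun i _ => hp.1 i) (Finset.mem_univ ω))

lemma dotProduct_fun_sum {ι : Type*} (s : Finset ι) (p : Ω → ℝ) (f : ι → Ω → ℝ) :
    p ⬝ᵥ (fun ω => ∑ i ∈ s, f i ω) = ∑ i ∈ s, p ⬝ᵥ f i := by
  rw [← Finset.sum_fn, dotProduct_sum]

lemma dotProduct_const_of_mem_simplex (hp : p ∈ simplex Ω) (c : ℝ) : p ⬝ᵥ (fun _ => c) = c := by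
  rw [dotProduct, ← Finset.sum_mul, hp.2, one_mul]

lemma dotProduct_const_add (hp : p ∈ simplex Ω) (c : ℝ) (f : Ω → ℝ) :
    p ⬝ᵥ (fun ω => c + f ω) = c + p ⬝ᵥ f := by
  rw [show (fun ω => c + f ω) = (fun _ => c) + f from rfl, dotProduct_add,
    dotProduct_const_of_mem_simplex hp]

lemma dotProduct_mono_of_mem_simplex (hp : p ∈ simplex Ω) (hfg : f ≤ g) : p ⬝ᵥ f ≤ p ⬝ᵥ g :=
  dotProduct_le_dotProduct_of_nonneg_left hfg hp.1

lemma abs_dotProduct_le_dotProduct_abs (hp : p ∈ simplex Ω) (f : Ω → ℝ) :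
    |p ⬝ᵥ f| ≤ p ⬝ᵥ |f| := by
  refine (Finset.abs_sum_le_sum_abs _ _).trans_eq (Finset.sum_congr rfl fun ω _ => ?_)
  rw [abs_mul, abs_of_nonneg (hp.1 ω), Pi.abs_apply]

lemma dotProduct_le_of_mem_simplex (hp : p ∈ simplex Ω) (hf : ∀ ω, f ω ≤ B) : p ⬝ᵥ f ≤ B :=
  (dotProduct_mono_of_mem_simplex hp hf).trans_eq (dotProduct_const_of_mem_simplex hp B)

lemma abs_dotProduct_le_of_mem_simplex (hp : p ∈ simplex Ω) (hf : ∀ ω, |f ω| ≤ B) :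
    |p ⬝ᵥ f| ≤ B :=
  (abs_dotProduct_le_dotProduct_abs hp f).trans (dotProduct_le_of_mem_simplex hp hf)

lemma dotProduct_abs_sq_le (hp : p ∈ simplex Ω) (f : Ω → ℝ) : (p ⬝ᵥ |f|) ^ 2 ≤ p ⬝ᵥ f ^ 2 := by
  simpa only [dotProduct, Pi.abs_apply, Pi.pow_apply, sq_abs] using
    Real.pow_arith_mean_le_arith_mean_pow Finset.univ p |f| (fun ω _ => hp.1 ω) hp.2
      (fun ω _ => abs_nonneg (f ω)) 2

lemma vecMul_mem_simplex [Fintype Ω'] (hp : p ∈ simplex Ω) {K : Matrix Ω Ω' ℝ}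
    (hK : ∀ ω, K ω ∈ simplex Ω') : p ᵥ* K ∈ simplex Ω' := by
  refine ⟨fun y => dotProduct_nonneg_of_nonneg hp.1 fun ω => (hK ω).1 y, ?_⟩
  have hrow : K *ᵥ (fun _ => 1) = fun _ => 1 :=
    funext fun ω => dotProduct_const_of_mem_simplex (hK ω) 1
  calc ∑ y, (p ᵥ* K) y = (p ᵥ* K) ⬝ᵥ (fun _ => 1) := by simp only [dotProduct, mul_one]
    _ = p ⬝ᵥ (fun _ => 1) := by rw [← Matrix.dotProduct_mulVec, hrow]
    _ = 1 := dotProduct_const_of_mem_simplex hp 1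

lemma l1dist_nonneg (p q : Ω → ℝ) : 0 ≤ l1dist p q :=
  Finset.sum_nonneg fun _ _ => abs_nonneg _

lemma abs_dotProduct_sub_dotProduct_le_mul_l1dist (hf : ∀ ω, |f ω| ≤ B) (p q : Ω → ℝ) :
    |p ⬝ᵥ f - q ⬝ᵥ f| ≤ B * l1dist p q := by
  rw [← sub_dotProduct, l1dist, Finset.mul_sum]
  refine (Finset.abs_sum_le_sum_abs _ _).trans (Finset.sum_le_sum fun ω _ => ?_)
  rw [abs_mul, mul_comm, Pi.sub_apply]
  exact mul_le_mul_of_nonneg_right (hf ω) (abs_nonneg _)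

lemma l1dist_vecMul_le [Fintype Ω'] (hp : p ∈ simplex Ω) (K K' : Matrix Ω Ω' ℝ) :
    l1dist (p ᵥ* K) (p ᵥ* K') ≤ p ⬝ᵥ fun ω => l1dist (K ω) (K' ω) :=
  calc l1dist (p ᵥ* K) (p ᵥ* K')
      = ∑ y, |p ⬝ᵥ fun ω => K ω y - K' ω y| := Finset.sum_congr rfl fun y _ => by
        rw [Matrix.vecMul, Matrix.vecMul, ← dotProduct_sub]; rfl
    _ ≤ ∑ y, p ⬝ᵥ fun ω => |K ω y - K' ω y| :=
        Finset.sum_le_sum fun y _ => abs_dotProduct_le_dotProduct_abs hp _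
    _ = p ⬝ᵥ fun ω => l1dist (K ω) (K' ω) := by
        simp only [dotProduct, l1dist, Finset.mul_sum]
        exact Finset.sum_comm

end Simplex

/-! ### Product laws -/

section ProductLaw

variable {ι Ω : Type*} [Fintype ι] [DecidableEq ι] [Fintype Ω] {q : ι → Ω → ℝ}

/-- The law of a family of independent random variables with marginal laws `q i`. -/
def productLaw {ι Ω : Type*} [Fintype ι] (q : ι → Ω → ℝ) (Y : ι → Ω) : ℝ := ∏ i, q i (Y i)

lemma productLaw_dotProduct_prod (q g : ι → Ω → ℝ) :
    productLaw q ⬝ᵥ (fun Y => ∏ i, g i (Y i)) = ∏ i, q i ⬝ᵥ g i := by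
  simp only [dotProduct, productLaw, ← Finset.prod_mul_distrib, Fintype.prod_sum]

lemma productLaw_mem_simplex (hq : ∀ i, q i ∈ simplex Ω) : productLaw q ∈ simplex (ι → Ω) := by
  refine ⟨fun Y => Finset.prod_nonneg fun i _ => (hq i).1 _, ?_⟩
  simp only [productLaw, ← Fintype.prod_sum, (hq _).2, Finset.prod_const_one]

lemma productLaw_dotProduct_eval (hq : ∀ i, q i ∈ simplex Ω) (i : ι) (f : Ω → ℝ) :
    productLaw q ⬝ᵥ (fun Y => f (Y i)) = q i ⬝ᵥ f := by
  have h := productLaw_dotProduct_prod q (Function.update (fun _ _ => 1) i f)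
  simpa [Function.update_apply, apply_ite, ite_apply, Finset.prod_ite_eq',
    dotProduct_const_of_mem_simplex (hq _)] using h

lemma productLaw_dotProduct_mul_eval (hq : ∀ i, q i ∈ simplex Ω) {i k : ι} (hik : i ≠ k)
    (f g : Ω → ℝ) :
    productLaw q ⬝ᵥ (fun Y => f (Y i) * g (Y k)) = (q i ⬝ᵥ f) * (q k ⬝ᵥ g) := by
  have hprod (ψ : ι → (Ω → ℝ) → ℝ) (hψ : ∀ j, ψ j (fun _ => 1) = 1) :
      ∏ j, ψ j (Function.update (Function.update (fun _ _ => 1) i f) k g j) = ψ i f * ψ k g := by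
    rw [Finset.prod_eq_mul i k hik (fun j _ hj => ?_) (by simp) (by simp)]
    · simp [hik]
    · rw [Function.update_of_ne hj.2, Function.update_of_ne hj.1, hψ]
  have hexp := hprod (fun j h => q j ⬝ᵥ h) fun j =>
    dotProduct_const_of_mem_simplex (hq j) 1
  rw [← hexp, ← productLaw_dotProduct_prod]
  congr 1
  exact funext fun Y => (hprod (fun j h => h (Y j)) fun _ => rfl).symm

lemma productLaw_dotProduct_sum_sq (hq : ∀ i, q i ∈ simplex Ω) {h : ι → Ω → ℝ}
    (hh : ∀ i, q i ⬝ᵥ h i = 0) :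
    productLaw q ⬝ᵥ (fun Y => (∑ i, h i (Y i)) ^ 2) = ∑ i, q i ⬝ᵥ h i ^ 2 := by
  have hcross (i k : ι) : productLaw q ⬝ᵥ (fun Y => h i (Y i) * h k (Y k)) =
      if i = k then q i ⬝ᵥ h i ^ 2 else 0 := by
    split_ifs with hik
    · subst hik
      rw [sq, ← productLaw_dotProduct_eval hq]
      rfl
    · rw [productLaw_dotProduct_mul_eval hq hik, hh, zero_mul]
  calc productLaw q ⬝ᵥ (fun Y => (∑ i, h i (Y i)) ^ 2)
      = ∑ i, ∑ k, productLaw q ⬝ᵥ (fun Y => h i (Y i) * h k (Y k)) := by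
        simp only [sq, Finset.sum_mul_sum, dotProduct_fun_sum]
    _ = ∑ i, q i ⬝ᵥ h i ^ 2 := by simp only [hcross, Finset.sum_ite_eq, Finset.mem_univ, if_true]

lemma dotProduct_sub_mean_sq_le_one {p f : Ω → ℝ} (hp : p ∈ simplex Ω) (hf : ∀ ω, |f ω| ≤ 1) :
    p ⬝ᵥ (fun ω => f ω - p ⬝ᵥ f) ^ 2 ≤ 1 := by
  have hexpand : p ⬝ᵥ (fun ω => f ω - p ⬝ᵥ f) ^ 2 = p ⬝ᵥ f ^ 2 - (p ⬝ᵥ f) ^ 2 := by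
    have hpoint : (fun ω => f ω - p ⬝ᵥ f) ^ 2 =
        f ^ 2 - (2 * (p ⬝ᵥ f)) • f + fun _ => (p ⬝ᵥ f) ^ 2 := by
      ext ω
      simp only [Pi.pow_apply, Pi.add_apply, Pi.sub_apply, Pi.smul_apply, smul_eq_mul]
      ring
    rw [hpoint, dotProduct_add, dotProduct_sub, dotProduct_smul,
      dotProduct_const_of_mem_simplex hp, smul_eq_mul]
    ring
  have hsq : p ⬝ᵥ f ^ 2 ≤ 1 :=
    dotProduct_le_of_mem_simplex hp fun ω => (sq_le_one_iff_abs_le_one _).2 (hf ω)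
  linarith [sq_nonneg (p ⬝ᵥ f)]

lemma productLaw_dotProduct_abs_sum_sub_mean_le (hq : ∀ i, q i ∈ simplex Ω) {f : ι → Ω → ℝ}
    (hf : ∀ i ω, |f i ω| ≤ 1) :
    productLaw q ⬝ᵥ (fun Y => |∑ i, (f i (Y i) - q i ⬝ᵥ f i)|) ≤ √(Fintype.card ι) := by
  have hcentred (i : ι) : q i ⬝ᵥ (fun ω => f i ω - q i ⬝ᵥ f i) = 0 := by
    rw [show (fun ω => f i ω - q i ⬝ᵥ f i) = f i - fun _ => q i ⬝ᵥ f i from rfl, dotProduct_sub,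
      dotProduct_const_of_mem_simplex (hq i), sub_self]
  refine Real.le_sqrt_of_sq_le ?_
  calc (productLaw q ⬝ᵥ fun Y => |∑ i, (f i (Y i) - q i ⬝ᵥ f i)|) ^ 2
      ≤ productLaw q ⬝ᵥ fun Y => (∑ i, (f i (Y i) - q i ⬝ᵥ f i)) ^ 2 :=
        dotProduct_abs_sq_le (productLaw_mem_simplex hq) _
    _ = ∑ i, q i ⬝ᵥ (fun ω => f i ω - q i ⬝ᵥ f i) ^ 2 :=
        productLaw_dotProduct_sum_sq hq (h := fun i ω => f i ω - q i ⬝ᵥ f i) hcentred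
    _ ≤ ∑ _i : ι, 1 := Finset.sum_le_sum fun i _ => dotProduct_sub_mean_sq_le_one (hq i) (hf i)
    _ = Fintype.card ι := by simp

end ProductLaw

/-! ### One agent -/

section Agent

variable [Fintype 𝒳] [Fintype 𝒰] {P : 𝒳 → 𝒰 → (𝒳 → ℝ) → 𝒳 → ℝ} {r : 𝒳 → 𝒰 → (𝒳 → ℝ) → ℝ}
  {μ0 g g' : 𝒳 → ℝ} {π : ℕ → 𝒳 → 𝒰 → ℝ} {L L' M : ℝ}

/-- The transition matrix at time `t` of an agent who plays `π` and whose neighborhood mean field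
is `g`. -/
def transition (P : 𝒳 → 𝒰 → (𝒳 → ℝ) → 𝒳 → ℝ) (π : ℕ → 𝒳 → 𝒰 → ℝ) (t : ℕ) (g : 𝒳 → ℝ) :
    Matrix 𝒳 𝒳 ℝ :=
  Matrix.of fun x => π t x ᵥ* Matrix.of fun u => P x u g

/-- The expected reward at time `t`, as a function of the state, of an agent who plays `π` and whose
neighborhood mean field is `g`. -/
def meanReward (r : 𝒳 → 𝒰 → (𝒳 → ℝ) → ℝ) (π : ℕ → 𝒳 → 𝒰 → ℝ) (t : ℕ) (g : 𝒳 → ℝ) : 𝒳 → ℝ :=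
  fun x => π t x ⬝ᵥ fun u => r x u g

lemma KernelLipschitz.mono (hP : KernelLipschitz P L) (hL : L ≤ L') : KernelLipschitz P L' :=
  fun x u ν ν' hν hν' => (hP x u ν ν' hν hν').trans
    (mul_le_mul_of_nonneg_right hL (l1dist_nonneg ν ν'))

lemma RewardLipschitz.mono (hr : RewardLipschitz r L) (hL : L ≤ L') : RewardLipschitz r L' :=
  fun x u ν ν' hν hν' => (hr x u ν ν' hν hν').trans
    (mul_le_mul_of_nonneg_right hL (l1dist_nonneg ν ν'))

lemma RewardLipschitz.exists_bound (hr : RewardLipschitz r L) (hL : 0 ≤ L) :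
    ∃ M, 0 ≤ M ∧ ∀ x u, ∀ ν ∈ subProb 𝒳, |r x u ν| ≤ M := by
  refine ⟨∑ x, ∑ u, |r x u 0| + L, by positivity, fun x u ν hν => ?_⟩
  have hzero : (0 : 𝒳 → ℝ) ∈ subProb 𝒳 := ⟨fun _ => le_rfl, by simp⟩
  have hdist : l1dist ν 0 ≤ 1 := by
    simpa only [l1dist, Pi.zero_apply, sub_zero, abs_of_nonneg (hν.1 _)] using hν.2
  have hsingle : |r x u 0| ≤ ∑ x, ∑ u, |r x u 0| :=
    (Finset.single_le_sum (f := fun u => |r x u 0|) (fun _ _ => abs_nonneg _)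
      (Finset.mem_univ u)).trans
      (Finset.single_le_sum (f := fun x => ∑ u, |r x u 0|) (fun _ _ => by positivity)
        (Finset.mem_univ x))
  calc |r x u ν| ≤ |r x u 0| + |r x u ν - r x u 0| := by
        linarith [abs_sub_abs_le_abs_sub (r x u ν) (r x u 0)]
    _ ≤ ∑ x, ∑ u, |r x u 0| + L :=
        add_le_add hsingle ((hr x u ν 0 hν hzero).trans (mul_le_of_le_one_right hL hdist))

lemma transition_mem_simplex (hP : IsKernel P) (hπ : IsPolicy π) (hg : g ∈ subProb 𝒳) (t : ℕ)
    (x : 𝒳) : transition P π t g x ∈ simplex 𝒳 :=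
  vecMul_mem_simplex (hπ t x) fun u => hP x u g hg

lemma l1dist_transition_le (hP : KernelLipschitz P L) (hπ : IsPolicy π) (hg : g ∈ subProb 𝒳)
    (hg' : g' ∈ subProb 𝒳) (t : ℕ) (x : 𝒳) :
    l1dist (transition P π t g x) (transition P π t g' x) ≤ L * l1dist g g' :=
  (l1dist_vecMul_le (hπ t x) _ _).trans
    (dotProduct_le_of_mem_simplex (hπ t x) fun u => hP x u g g' hg hg')

lemma abs_transition_dotProduct_sub_le (hP : KernelLipschitz P L) (hπ : IsPolicy π)
    (hg : g ∈ subProb 𝒳) (hg' : g' ∈ subProb 𝒳) {f : 𝒳 → ℝ} (hM : 0 ≤ M) (hf : ∀ x, |f x| ≤ M)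
    (t : ℕ) (x : 𝒳) :
    |transition P π t g x ⬝ᵥ f - transition P π t g' x ⬝ᵥ f| ≤ M * (L * l1dist g g') :=
  (abs_dotProduct_sub_dotProduct_le_mul_l1dist hf _ _).trans
    (mul_le_mul_of_nonneg_left (l1dist_transition_le hP hπ hg hg' t x) hM)

lemma abs_meanReward_sub_le (hr : RewardLipschitz r L) (hπ : IsPolicy π) (hg : g ∈ subProb 𝒳)
    (hg' : g' ∈ subProb 𝒳) (t : ℕ) (x : 𝒳) :
    |meanReward r π t g x - meanReward r π t g' x| ≤ L * l1dist g g' := by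
  rw [meanReward, meanReward, ← dotProduct_sub]
  exact abs_dotProduct_le_of_mem_simplex (hπ t x) fun u => hr x u g g' hg hg'

lemma abs_meanReward_le (hM : ∀ x u, ∀ ν ∈ subProb 𝒳, |r x u ν| ≤ M) (hπ : IsPolicy π)
    (hg : g ∈ subProb 𝒳) (t : ℕ) (x : 𝒳) : |meanReward r π t g x| ≤ M :=
  abs_dotProduct_le_of_mem_simplex (hπ t x) fun u => hM x u g hg

lemma stateLaw_succ (P : 𝒳 → 𝒰 → (𝒳 → ℝ) → 𝒳 → ℝ) (μ0 : 𝒳 → ℝ) (G : ℕ → 𝒳 → ℝ)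
    (π : ℕ → 𝒳 → 𝒰 → ℝ) (t : ℕ) :
    stateLaw P μ0 G π (t + 1) = stateLaw P μ0 G π t ᵥ* transition P π t (G t) := rfl

end Agent

/-! ### The `N`-agent system -/

section EmpiricalMean

variable [Fintype 𝒳] {N : ℕ}

/-- The average of `f j (X j) - 𝔼 f j` over the agents `j`, the expectation being taken under a
reference law `ν j`. Each agent has its own test function. -/
noncomputable def deviation (ν f : Fin N → 𝒳 → ℝ) (X : Fin N → 𝒳) : ℝ :=
  (N : ℝ)⁻¹ * ∑ j, (f j (X j) - ν j ⬝ᵥ f j)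

/-- The neighborhood mean field of agent `i` when each agent `j` is replaced by its law `ν j`. -/
noncomputable def avgNbhd (ξ : Fin N → Fin N → ℝ) (ν : Fin N → 𝒳 → ℝ) (i : Fin N) : 𝒳 → ℝ :=
  fun x => (N : ℝ)⁻¹ * ∑ j, ξ i j * ν j x

-- Inserting the conditional means of the `f j (Y j)` given `X` separates the fluctuation of `Y`,
-- the discrepancy of the dynamics and the deviation of `X` tested against `K j *ᵥ f j`.
lemma deviation_vecMul (ν q f : Fin N → 𝒳 → ℝ) (K : Fin N → Matrix 𝒳 𝒳 ℝ) (X Y : Fin N → 𝒳) :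
    deviation (fun j => ν j ᵥ* K j) f Y = deviation q f Y +
      (N : ℝ)⁻¹ * ∑ j, (q j ⬝ᵥ f j - K j (X j) ⬝ᵥ f j) + deviation ν (fun j => K j *ᵥ f j) X := by
  simp only [deviation, ← mul_add, ← Finset.sum_add_distrib]
  congr 1
  refine Finset.sum_congr rfl fun j _ => ?_
  rw [Matrix.dotProduct_mulVec, show (K j *ᵥ f j) (X j) = K j (X j) ⬝ᵥ f j from rfl]
  ring

lemma productLaw_dotProduct_abs_deviation_le {q f : Fin N → 𝒳 → ℝ} (hq : ∀ j, q j ∈ simplex 𝒳)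
    (hf : ∀ j x, |f j x| ≤ 1) : productLaw q ⬝ᵥ (fun Y => |deviation q f Y|) ≤ (√N)⁻¹ := by
  have hscale : (fun Y => |deviation q f Y|) =
      (N : ℝ)⁻¹ • fun Y : Fin N → 𝒳 => |∑ j, (f j (Y j) - q j ⬝ᵥ f j)| :=
    funext fun Y => by
      rw [deviation, abs_mul, abs_of_nonneg (by positivity), Pi.smul_apply, smul_eq_mul]
  rw [hscale, dotProduct_smul, smul_eq_mul]
  calc (N : ℝ)⁻¹ * productLaw q ⬝ᵥ (fun Y => |∑ j, (f j (Y j) - q j ⬝ᵥ f j)|)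
      ≤ (N : ℝ)⁻¹ * √N := by
        gcongr
        simpa only [Fintype.card_fin] using productLaw_dotProduct_abs_sum_sub_mean_le hq hf
    _ = (√N)⁻¹ := by rw [← div_eq_inv_mul, Real.sqrt_div_self]

variable [DecidableEq 𝒳] {ξ : Fin N → Fin N → ℝ}

lemma empNbhd_mem_subProb (hξ : ∀ i j, ξ i j ∈ Set.Icc (0 : ℝ) 1) (X : Fin N → 𝒳) (i : Fin N) :
    empNbhd ξ X i ∈ subProb 𝒳 := by
  refine ⟨fun x => mul_nonneg (by positivity) <| Finset.sum_nonneg fun j _ =>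
    mul_nonneg (hξ i j).1 (by split_ifs <;> norm_num), ?_⟩
  calc ∑ x, empNbhd ξ X i x = (N : ℝ)⁻¹ * ∑ j, ξ i j := by
        simp only [empNbhd, ← Finset.mul_sum]
        rw [Finset.sum_comm]
        simp
    _ ≤ (N : ℝ)⁻¹ * ∑ _j : Fin N, 1 := by
        gcongr with j
        exact (hξ i j).2
    _ ≤ 1 := by simpa using inv_mul_le_one

lemma empNbhd_sub_avgNbhd (ξ : Fin N → Fin N → ℝ) (ν : Fin N → 𝒳 → ℝ) (X : Fin N → 𝒳)
    (i : Fin N) (x : 𝒳) :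
    empNbhd ξ X i x - avgNbhd ξ ν i x = deviation ν (fun j => ξ i j • Pi.single x 1) X := by
  simp only [empNbhd, avgNbhd, deviation, ← mul_sub, ← Finset.sum_sub_distrib, dotProduct_smul,
    dotProduct_single_one, Pi.smul_apply, smul_eq_mul, Pi.single_apply]

lemma l1dist_empNbhd_le (ξ : Fin N → Fin N → ℝ) (ν : Fin N → 𝒳 → ℝ) (X : Fin N → 𝒳) (i : Fin N)
    (g : 𝒳 → ℝ) :
    l1dist (empNbhd ξ X i) g ≤
      l1dist (avgNbhd ξ ν i) g + ∑ x, |deviation ν (fun j => ξ i j • Pi.single x 1) X| := by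
  simp only [l1dist, ← Finset.sum_add_distrib, ← empNbhd_sub_avgNbhd]
  exact Finset.sum_le_sum fun x _ => (abs_sub_le _ _ _).trans_eq (add_comm _ _)

lemma dotProduct_l1dist_empNbhd_le {p : (Fin N → 𝒳) → ℝ} (hp : p ∈ simplex (Fin N → 𝒳))
    (hξ : ∀ i j, ξ i j ∈ Set.Icc (0 : ℝ) 1) {ν : Fin N → 𝒳 → ℝ} {D : ℝ}
    (hD : ∀ f : Fin N → 𝒳 → ℝ, (∀ j x, |f j x| ≤ 1) → p ⬝ᵥ (fun X => |deviation ν f X|) ≤ D)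
    (i : Fin N) (g : 𝒳 → ℝ) :
    p ⬝ᵥ (fun X => l1dist (empNbhd ξ X i) g) ≤
      l1dist (avgNbhd ξ ν i) g + Fintype.card 𝒳 * D := by
  have htest (x : 𝒳) (j : Fin N) (y : 𝒳) : |(ξ i j • Pi.single x (1 : ℝ) : 𝒳 → ℝ) y| ≤ 1 := by
    obtain ⟨h0, h1⟩ := hξ i j
    simp only [Pi.smul_apply, Pi.single_apply, smul_eq_mul, abs_mul, abs_of_nonneg h0]
    split_ifs <;> simp [h1]
  calc p ⬝ᵥ (fun X => l1dist (empNbhd ξ X i) g)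
      ≤ p ⬝ᵥ (fun X => l1dist (avgNbhd ξ ν i) g +
          ∑ x, |deviation ν (fun j => ξ i j • Pi.single x 1) X|) :=
        dotProduct_mono_of_mem_simplex hp fun X => l1dist_empNbhd_le ξ ν X i g
    _ = l1dist (avgNbhd ξ ν i) g +
          ∑ x, p ⬝ᵥ (fun X => |deviation ν (fun j => ξ i j • Pi.single x 1) X|) := by
        rw [dotProduct_const_add hp, dotProduct_fun_sum]
    _ ≤ l1dist (avgNbhd ξ ν i) g + ∑ _x : 𝒳, D := by
        gcongr with x
        exact hD _ (htest x)
    _ = l1dist (avgNbhd ξ ν i) g + Fintype.card 𝒳 * D := by simp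

end EmpiricalMean

section Errors

variable [Fintype 𝒳] [Fintype 𝒰] {N T t : ℕ} {P : 𝒳 → 𝒰 → (𝒳 → ℝ) → 𝒳 → ℝ} {μ0 : 𝒳 → ℝ}
  {ξ : Fin N → Fin N → ℝ} {πr : Fin N → ℕ → 𝒳 → 𝒰 → ℝ} {G : Fin N → ℕ → 𝒳 → ℝ}

/-- The error, accumulated over the horizon, of taking `G i` for the neighborhood mean field of
agent `i` when each agent `j` is replaced by its law under the policy `πr j` and the neighborhood
mean field `G j`. -/
noncomputable def nbhdError (T : ℕ) (P : 𝒳 → 𝒰 → (𝒳 → ℝ) → 𝒳 → ℝ) (μ0 : 𝒳 → ℝ)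
    (ξ : Fin N → Fin N → ℝ) (πr : Fin N → ℕ → 𝒳 → 𝒰 → ℝ) (G : Fin N → ℕ → 𝒳 → ℝ) (i : Fin N) : ℝ :=
  ∑ t ∈ Finset.range T, l1dist (avgNbhd ξ (fun j => stateLaw P μ0 (G j) (πr j) t) i) (G i t)

/-- The error in the empirical averages over all agents: a fluctuation of order `1 / √N` and the
mean of the individual errors. -/
noncomputable def systemError (T : ℕ) (P : 𝒳 → 𝒰 → (𝒳 → ℝ) → 𝒳 → ℝ) (μ0 : 𝒳 → ℝ)
    (ξ : Fin N → Fin N → ℝ) (πr : Fin N → ℕ → 𝒳 → 𝒰 → ℝ) (G : Fin N → ℕ → 𝒳 → ℝ) : ℝ :=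
  (√N)⁻¹ + (N : ℝ)⁻¹ * ∑ j, nbhdError T P μ0 ξ πr G j

lemma nbhdError_nonneg (i : Fin N) : 0 ≤ nbhdError T P μ0 ξ πr G i :=
  Finset.sum_nonneg fun _ _ => l1dist_nonneg _ _

lemma inv_sqrt_le_systemError : (√N)⁻¹ ≤ systemError T P μ0 ξ πr G :=
  le_add_of_nonneg_right <|
    mul_nonneg (by positivity) (Finset.sum_nonneg fun j _ => nbhdError_nonneg j)

lemma systemError_nonneg : 0 ≤ systemError T P μ0 ξ πr G :=
  (inv_nonneg.2 (Real.sqrt_nonneg N)).trans inv_sqrt_le_systemError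

lemma l1dist_avgNbhd_le_nbhdError (ht : t < T) (i : Fin N) :
    l1dist (avgNbhd ξ (fun j => stateLaw P μ0 (G j) (πr j) t) i) (G i t) ≤
      nbhdError T P μ0 ξ πr G i :=
  Finset.single_le_sum (f := fun t => l1dist (avgNbhd ξ
    (fun j => stateLaw P μ0 (G j) (πr j) t) i) (G i t)) (fun _ _ => l1dist_nonneg _ _)
    (Finset.mem_range.2 ht)

end Errors

section JointLaw

variable [Fintype 𝒳] [DecidableEq 𝒳] [Fintype 𝒰] {N : ℕ} {ξ : Fin N → Fin N → ℝ}
  {P : 𝒳 → 𝒰 → (𝒳 → ℝ) → 𝒳 → ℝ} {r : 𝒳 → 𝒰 → (𝒳 → ℝ) → ℝ} {μ0 : 𝒳 → ℝ}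
  {πs πr : Fin N → ℕ → 𝒳 → 𝒰 → ℝ} {L M : ℝ}

/-- The transition matrix of the `N` agents at time `t`: given the current states, the agents move
independently. -/
noncomputable def jointKernel (P : 𝒳 → 𝒰 → (𝒳 → ℝ) → 𝒳 → ℝ) (ξ : Fin N → Fin N → ℝ)
    (πs : Fin N → ℕ → 𝒳 → 𝒰 → ℝ) (t : ℕ) : Matrix (Fin N → 𝒳) (Fin N → 𝒳) ℝ :=
  Matrix.of fun X => productLaw fun i => transition P (πs i) t (empNbhd ξ X i) (X i)

lemma jointLaw_succ (P : 𝒳 → 𝒰 → (𝒳 → ℝ) → 𝒳 → ℝ) (μ0 : 𝒳 → ℝ) (ξ : Fin N → Fin N → ℝ)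
    (πs : Fin N → ℕ → 𝒳 → 𝒰 → ℝ) (t : ℕ) :
    jointLaw P μ0 ξ πs (t + 1) = jointLaw P μ0 ξ πs t ᵥ* jointKernel P ξ πs t := rfl

lemma transition_empNbhd_mem_simplex (hP : IsKernel P) (hξ : ∀ i j, ξ i j ∈ Set.Icc (0 : ℝ) 1)
    (hπs : ∀ j, IsPolicy (πs j)) (t : ℕ) (X : Fin N → 𝒳) (i : Fin N) :
    transition P (πs i) t (empNbhd ξ X i) (X i) ∈ simplex 𝒳 :=
  transition_mem_simplex hP (hπs i) (empNbhd_mem_subProb hξ X i) t (X i)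

lemma jointLaw_mem_simplex (hμ0 : μ0 ∈ simplex 𝒳) (hP : IsKernel P)
    (hξ : ∀ i j, ξ i j ∈ Set.Icc (0 : ℝ) 1) (hπs : ∀ j, IsPolicy (πs j)) (t : ℕ) :
    jointLaw P μ0 ξ πs t ∈ simplex (Fin N → 𝒳) := by
  induction t with
  | zero => exact productLaw_mem_simplex fun _ => hμ0
  | succ t ih =>
    exact vecMul_mem_simplex ih fun X =>
      productLaw_mem_simplex (transition_empNbhd_mem_simplex hP hξ hπs t X)

lemma abs_mean_transition_sub_le (hP : IsKernel P) (hPLip : KernelLipschitz P L) (hL : 0 ≤ L)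
    (hξ : ∀ i j, ξ i j ∈ Set.Icc (0 : ℝ) 1) (hπs : ∀ j, IsPolicy (πs j))
    (hπr : ∀ j, IsPolicy (πr j)) {k : Fin N} (hk : ∀ j ≠ k, πs j = πr j) {g : Fin N → 𝒳 → ℝ}
    (hg : ∀ j, g j ∈ subProb 𝒳) {f : Fin N → 𝒳 → ℝ} (hf : ∀ j x, |f j x| ≤ 1) (t : ℕ)
    (X : Fin N → 𝒳) :
    |(N : ℝ)⁻¹ * ∑ j, (transition P (πs j) t (empNbhd ξ X j) (X j) ⬝ᵥ f j -
        transition P (πr j) t (g j) (X j) ⬝ᵥ f j)| ≤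
      L * ((N : ℝ)⁻¹ * ∑ j, l1dist (empNbhd ξ X j) (g j)) + 2 * (N : ℝ)⁻¹ := by
  have hdrift (j : Fin N) : |transition P (πs j) t (empNbhd ξ X j) (X j) ⬝ᵥ f j -
      transition P (πr j) t (g j) (X j) ⬝ᵥ f j| ≤
      L * l1dist (empNbhd ξ X j) (g j) + if j = k then 2 else 0 := by
    split_ifs with hj
    · have hs := abs_dotProduct_le_of_mem_simplex
        (transition_empNbhd_mem_simplex hP hξ hπs t X j) (hf j)
      have hr := abs_dotProduct_le_of_mem_simplex
        (transition_mem_simplex hP (hπr j) (hg j) t (X j)) (hf j)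
      have hdist := mul_nonneg hL (l1dist_nonneg (empNbhd ξ X j) (g j))
      exact (abs_sub _ _).trans (by linarith)
    · simpa only [hk j hj, one_mul, add_zero] using abs_transition_dotProduct_sub_le hPLip
        (hπr j) (empNbhd_mem_subProb hξ X j) (hg j) zero_le_one (hf j) t (X j)
  rw [abs_mul, abs_of_nonneg (inv_nonneg.2 N.cast_nonneg)]
  calc (N : ℝ)⁻¹ * |∑ j, (transition P (πs j) t (empNbhd ξ X j) (X j) ⬝ᵥ f j -
        transition P (πr j) t (g j) (X j) ⬝ᵥ f j)|
      ≤ (N : ℝ)⁻¹ * ∑ j, (L * l1dist (empNbhd ξ X j) (g j) + if j = k then 2 else 0) := by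
        gcongr
        exact (Finset.abs_sum_le_sum_abs _ _).trans (Finset.sum_le_sum fun j _ => hdrift j)
    _ = L * ((N : ℝ)⁻¹ * ∑ j, l1dist (empNbhd ξ X j) (g j)) + 2 * (N : ℝ)⁻¹ := by
        rw [Finset.sum_add_distrib, ← Finset.mul_sum, Finset.sum_ite_eq' Finset.univ k,
          if_pos (Finset.mem_univ k)]
        ring

lemma jointKernel_dotProduct_abs_deviation_le (hP : IsKernel P) (hPLip : KernelLipschitz P L)
    (hL : 0 ≤ L) (hξ : ∀ i j, ξ i j ∈ Set.Icc (0 : ℝ) 1) (hπs : ∀ j, IsPolicy (πs j))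
    (hπr : ∀ j, IsPolicy (πr j)) {k : Fin N} (hk : ∀ j ≠ k, πs j = πr j) {g : Fin N → 𝒳 → ℝ}
    (hg : ∀ j, g j ∈ subProb 𝒳) {f : Fin N → 𝒳 → ℝ} (hf : ∀ j x, |f j x| ≤ 1)
    (ν : Fin N → 𝒳 → ℝ) (t : ℕ) (X : Fin N → 𝒳) :
    jointKernel P ξ πs t X ⬝ᵥ
        (fun Y => |deviation (fun j => ν j ᵥ* transition P (πr j) t (g j)) f Y|) ≤
      3 * (√N)⁻¹ + (L * ((N : ℝ)⁻¹ * ∑ j, l1dist (empNbhd ξ X j) (g j)) +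
        |deviation ν (fun j => transition P (πr j) t (g j) *ᵥ f j) X|) := by
  set q := fun j => transition P (πs j) t (empNbhd ξ X j) (X j)
  have hq : ∀ j, q j ∈ simplex 𝒳 := transition_empNbhd_mem_simplex hP hξ hπs t X
  set K := fun j => transition P (πr j) t (g j)
  have hinv : (N : ℝ)⁻¹ ≤ (√N)⁻¹ :=
    inv_anti₀ (Real.sqrt_pos.2 (Nat.cast_pos.2 k.pos))
      (Real.sqrt_le_self_iff.2 (.inr (Nat.one_le_cast.2 k.pos)))
  have hpoint (Y : Fin N → 𝒳) : |deviation (fun j => ν j ᵥ* K j) f Y| ≤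
      2 * (√N)⁻¹ + L * ((N : ℝ)⁻¹ * ∑ j, l1dist (empNbhd ξ X j) (g j)) +
        |deviation ν (fun j => K j *ᵥ f j) X| + |deviation q f Y| := by
    rw [deviation_vecMul ν q f K X Y]
    refine (abs_add_three _ _ _).trans ?_
    linarith [abs_mean_transition_sub_le hP hPLip hL hξ hπs hπr hk hg hf t X]
  calc jointKernel P ξ πs t X ⬝ᵥ (fun Y => |deviation (fun j => ν j ᵥ* K j) f Y|)
      ≤ _ := dotProduct_mono_of_mem_simplex (productLaw_mem_simplex hq) hpoint
    _ = _ := dotProduct_const_add (productLaw_mem_simplex hq) _ _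
    _ ≤ _ := by linarith [productLaw_dotProduct_abs_deviation_le hq hf]

lemma mean_dotProduct_l1dist_empNbhd_le (hN : N ≠ 0) {p : (Fin N → 𝒳) → ℝ}
    (hp : p ∈ simplex (Fin N → 𝒳)) (hξ : ∀ i j, ξ i j ∈ Set.Icc (0 : ℝ) 1)
    {G : Fin N → ℕ → 𝒳 → ℝ} {T t : ℕ} (ht : t < T) {D : ℝ}
    (hD : ∀ f : Fin N → 𝒳 → ℝ, (∀ j x, |f j x| ≤ 1) →
      p ⬝ᵥ (fun X => |deviation (fun j => stateLaw P μ0 (G j) (πr j) t) f X|) ≤ D) :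
    (N : ℝ)⁻¹ * ∑ j, p ⬝ᵥ (fun X => l1dist (empNbhd ξ X j) (G j t)) ≤
      (N : ℝ)⁻¹ * ∑ j, nbhdError T P μ0 ξ πr G j + Fintype.card 𝒳 * D :=
  calc (N : ℝ)⁻¹ * ∑ j, p ⬝ᵥ (fun X => l1dist (empNbhd ξ X j) (G j t))
      ≤ (N : ℝ)⁻¹ * ∑ j, (nbhdError T P μ0 ξ πr G j + Fintype.card 𝒳 * D) := by
        gcongr with j
        exact (dotProduct_l1dist_empNbhd_le hp hξ hD j (G j t)).trans
          (add_le_add_left (l1dist_avgNbhd_le_nbhdError ht j) _)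
    _ = (N : ℝ)⁻¹ * ∑ j, nbhdError T P μ0 ξ πr G j + Fintype.card 𝒳 * D := by
        rw [Finset.sum_add_distrib, mul_add, Finset.sum_const, Finset.card_univ, Fintype.card_fin,
          nsmul_eq_mul, inv_mul_cancel_left₀ (Nat.cast_ne_zero.2 hN)]

lemma jointLaw_succ_dotProduct_abs_deviation_le (hμ0 : μ0 ∈ simplex 𝒳) (hP : IsKernel P)
    (hPLip : KernelLipschitz P L) (hL : 0 ≤ L) (hξ : ∀ i j, ξ i j ∈ Set.Icc (0 : ℝ) 1)
    (hπs : ∀ j, IsPolicy (πs j)) (hπr : ∀ j, IsPolicy (πr j)) {k : Fin N}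
    (hk : ∀ j ≠ k, πs j = πr j) {G : Fin N → ℕ → 𝒳 → ℝ} (hG : ∀ j t, G j t ∈ subProb 𝒳)
    {T t : ℕ} (ht : t < T) {D : ℝ}
    (hD : ∀ f : Fin N → 𝒳 → ℝ, (∀ j x, |f j x| ≤ 1) → jointLaw P μ0 ξ πs t ⬝ᵥ
      (fun X => |deviation (fun j => stateLaw P μ0 (G j) (πr j) t) f X|) ≤ D)
    {f : Fin N → 𝒳 → ℝ} (hf : ∀ j x, |f j x| ≤ 1) :
    jointLaw P μ0 ξ πs (t + 1) ⬝ᵥ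
        (fun X => |deviation (fun j => stateLaw P μ0 (G j) (πr j) (t + 1)) f X|) ≤
      (1 + L * Fintype.card 𝒳) * D + (3 + L) * systemError T P μ0 ξ πr G := by
  set p := jointLaw P μ0 ξ πs t
  have hp : p ∈ simplex (Fin N → 𝒳) := jointLaw_mem_simplex hμ0 hP hξ hπs t
  set E := (N : ℝ)⁻¹ * ∑ j, nbhdError T P μ0 ξ πr G j
  have hKf (j : Fin N) (x : 𝒳) : |(transition P (πr j) t (G j t) *ᵥ f j) x| ≤ 1 :=
    abs_dotProduct_le_of_mem_simplex (transition_mem_simplex hP (hπr j) (hG j t) t x) (hf j)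
  have hdist := mean_dotProduct_l1dist_empNbhd_le k.pos.ne' hp hξ ht hD
  calc jointLaw P μ0 ξ πs (t + 1) ⬝ᵥ
        (fun X => |deviation (fun j => stateLaw P μ0 (G j) (πr j) (t + 1)) f X|)
      ≤ p ⬝ᵥ (fun X => 3 * (√N)⁻¹ + (L * ((N : ℝ)⁻¹ * ∑ j, l1dist (empNbhd ξ X j) (G j t)) +
          |deviation (fun j => stateLaw P μ0 (G j) (πr j) t)
            (fun j => transition P (πr j) t (G j t) *ᵥ f j) X|)) := by
        rw [jointLaw_succ, ← Matrix.dotProduct_mulVec]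
        exact dotProduct_mono_of_mem_simplex hp fun X => jointKernel_dotProduct_abs_deviation_le
          hP hPLip hL hξ hπs hπr hk (fun j => hG j t) hf _ t X
    _ = 3 * (√N)⁻¹ + (L * ((N : ℝ)⁻¹ * ∑ j, p ⬝ᵥ (fun X => l1dist (empNbhd ξ X j) (G j t))) +
          p ⬝ᵥ (fun X => |deviation (fun j => stateLaw P μ0 (G j) (πr j) t)
            (fun j => transition P (πr j) t (G j t) *ᵥ f j) X|)) := by
        rw [dotProduct_const_add hp, ← dotProduct_fun_sum, ← smul_eq_mul L, ← smul_eq_mul (N : ℝ)⁻¹,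
          ← dotProduct_smul, ← dotProduct_smul, ← dotProduct_add]
        rfl
    _ ≤ 3 * (√N)⁻¹ + (L * (E + Fintype.card 𝒳 * D) + D) := by gcongr; exact hD _ hKf
    _ ≤ (1 + L * Fintype.card 𝒳) * D + (3 + L) * ((√N)⁻¹ + E) := by
        have hE : 0 ≤ E := mul_nonneg (inv_nonneg.2 N.cast_nonneg)
          (Finset.sum_nonneg fun j _ => nbhdError_nonneg j)
        have hsqrt := mul_nonneg hL (inv_nonneg.2 (Real.sqrt_nonneg N))
        linarith

lemma jointLaw_dotProduct_abs_deviation_le (hμ0 : μ0 ∈ simplex 𝒳) (hP : IsKernel P)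
    (hPLip : KernelLipschitz P L) (hL : 0 ≤ L) (hξ : ∀ i j, ξ i j ∈ Set.Icc (0 : ℝ) 1)
    (hπs : ∀ j, IsPolicy (πs j)) (hπr : ∀ j, IsPolicy (πr j)) {k : Fin N}
    (hk : ∀ j ≠ k, πs j = πr j) {G : Fin N → ℕ → 𝒳 → ℝ} (hG : ∀ j t, G j t ∈ subProb 𝒳)
    {T t : ℕ} (ht : t ≤ T) {f : Fin N → 𝒳 → ℝ} (hf : ∀ j x, |f j x| ≤ 1) :
    jointLaw P μ0 ξ πs t ⬝ᵥ
        (fun X => |deviation (fun j => stateLaw P μ0 (G j) (πr j) t) f X|) ≤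
      (3 + L) * (t + 1) * (1 + L * Fintype.card 𝒳) ^ t * systemError T P μ0 ξ πr G := by
  set S := systemError T P μ0 ξ πr G
  have hS : 0 ≤ S := systemError_nonneg
  induction t generalizing f with
  | zero =>
    have hfluct := (productLaw_dotProduct_abs_deviation_le (fun _ => hμ0) hf).trans
      (inv_sqrt_le_systemError (T := T) (P := P) (μ0 := μ0) (ξ := ξ) (πr := πr) (G := G))
    refine hfluct.trans ?_
    push_cast
    nlinarith
  | succ t ih =>
    set a := 1 + L * Fintype.card 𝒳
    have ha : 1 ≤ a := le_add_of_nonneg_right (by positivity)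
    calc _ ≤ a * ((3 + L) * (t + 1) * a ^ t * S) + (3 + L) * S :=
          jointLaw_succ_dotProduct_abs_deviation_le hμ0 hP hPLip hL hξ hπs hπr hk hG ht
            (fun f hf => ih (Nat.le_of_succ_le ht) hf) hf
      _ ≤ a * ((3 + L) * (t + 1) * a ^ t * S) + (3 + L) * S * a ^ (t + 1) := by
          exact add_le_add_right (le_mul_of_one_le_right (by positivity) (one_le_pow₀ ha)) _
      _ = (3 + L) * ((t + 1 : ℕ) + 1) * a ^ (t + 1) * S := by push_cast; ring

/-- The expected distance between the empirical neighborhood mean field of agent `i` and `g`. -/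
noncomputable def expectedNbhdDist (P : 𝒳 → 𝒰 → (𝒳 → ℝ) → 𝒳 → ℝ) (μ0 : 𝒳 → ℝ)
    (ξ : Fin N → Fin N → ℝ) (πs : Fin N → ℕ → 𝒳 → 𝒰 → ℝ) (t : ℕ) (i : Fin N) (g : 𝒳 → ℝ) : ℝ :=
  jointLaw P μ0 ξ πs t ⬝ᵥ fun X => l1dist (empNbhd ξ X i) g

lemma expectedNbhdDist_nonneg (hμ0 : μ0 ∈ simplex 𝒳) (hP : IsKernel P)
    (hξ : ∀ i j, ξ i j ∈ Set.Icc (0 : ℝ) 1) (hπs : ∀ j, IsPolicy (πs j)) (t : ℕ) (i : Fin N)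
    (g : 𝒳 → ℝ) : 0 ≤ expectedNbhdDist P μ0 ξ πs t i g :=
  dotProduct_nonneg_of_nonneg (jointLaw_mem_simplex hμ0 hP hξ hπs t).1 fun _ => l1dist_nonneg _ _

lemma expectedNbhdDist_le (hμ0 : μ0 ∈ simplex 𝒳) (hP : IsKernel P)
    (hPLip : KernelLipschitz P L) (hL : 0 ≤ L) (hξ : ∀ i j, ξ i j ∈ Set.Icc (0 : ℝ) 1)
    (hπs : ∀ j, IsPolicy (πs j)) (hπr : ∀ j, IsPolicy (πr j)) {k : Fin N}
    (hk : ∀ j ≠ k, πs j = πr j) {G : Fin N → ℕ → 𝒳 → ℝ} (hG : ∀ j t, G j t ∈ subProb 𝒳)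
    {T t : ℕ} (ht : t < T) (i : Fin N) :
    expectedNbhdDist P μ0 ξ πs t i (G i t) ≤
      (1 + Fintype.card 𝒳 * ((3 + L) * (T + 1) * (1 + L * Fintype.card 𝒳) ^ T)) *
        (systemError T P μ0 ξ πr G + nbhdError T P μ0 ξ πr G i) := by
  set S := systemError T P μ0 ξ πr G
  have hS : 0 ≤ S := systemError_nonneg
  set C := (3 + L) * (T + 1) * (1 + L * Fintype.card 𝒳) ^ T
  have hC : (3 + L) * (t + 1) * (1 + L * Fintype.card 𝒳) ^ t ≤ C := by
    have hpow := pow_le_pow_right₀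
      (le_add_of_nonneg_right (a := (1 : ℝ)) (mul_nonneg hL (Fintype.card 𝒳).cast_nonneg)) ht.le
    have hcast : (t : ℝ) + 1 ≤ T + 1 := by gcongr
    exact mul_le_mul (mul_le_mul_of_nonneg_left hcast (by positivity)) hpow (by positivity)
      (by positivity)
  have hdist : expectedNbhdDist P μ0 ξ πs t i (G i t) ≤
      nbhdError T P μ0 ξ πr G i + Fintype.card 𝒳 * (C * S) :=
    (dotProduct_l1dist_empNbhd_le (jointLaw_mem_simplex hμ0 hP hξ hπs t) hξ
      (fun f hf => (jointLaw_dotProduct_abs_deviation_le hμ0 hP hPLip hL hξ hπs hπr hk hG ht.le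
        hf).trans (mul_le_mul_of_nonneg_right hC hS)) i (G i t)).trans
      (add_le_add_left (l1dist_avgNbhd_le_nbhdError ht i) _)
  have hcard : 0 ≤ Fintype.card 𝒳 * C * nbhdError T P μ0 ξ πr G i :=
    mul_nonneg (by positivity) (nbhdError_nonneg i)
  linarith

lemma abs_jointLaw_dotProduct_eval_sub_le (hμ0 : μ0 ∈ simplex 𝒳) (hP : IsKernel P)
    (hPLip : KernelLipschitz P L) (hξ : ∀ i j, ξ i j ∈ Set.Icc (0 : ℝ) 1)
    (hπs : ∀ j, IsPolicy (πs j)) {g : ℕ → 𝒳 → ℝ} (hg : ∀ t, g t ∈ subProb 𝒳) (i : Fin N)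
    (hM : 0 ≤ M) {h : 𝒳 → ℝ} (hh : ∀ x, |h x| ≤ M) (t : ℕ) :
    |jointLaw P μ0 ξ πs t ⬝ᵥ (fun X => h (X i)) - stateLaw P μ0 g (πs i) t ⬝ᵥ h| ≤
      M * L * ∑ s ∈ Finset.range t, expectedNbhdDist P μ0 ξ πs s i (g s) := by
  induction t generalizing h with
  | zero =>
    have hmarg : jointLaw P μ0 ξ πs 0 ⬝ᵥ (fun X => h (X i)) = μ0 ⬝ᵥ h :=
      productLaw_dotProduct_eval (fun _ => hμ0) i h
    rw [hmarg, stateLaw, sub_self, abs_zero, Finset.sum_range_zero, mul_zero]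
  | succ t ih =>
    set p := jointLaw P μ0 ξ πs t
    have hp : p ∈ simplex (Fin N → 𝒳) := jointLaw_mem_simplex hμ0 hP hξ hπs t
    set K := transition P (πs i) t (g t)
    have hKh (x : 𝒳) : |(K *ᵥ h) x| ≤ M :=
      abs_dotProduct_le_of_mem_simplex (transition_mem_simplex hP (hπs i) (hg t) t x) hh
    have hstep : |jointLaw P μ0 ξ πs (t + 1) ⬝ᵥ (fun X => h (X i)) -
        p ⬝ᵥ (fun X => (K *ᵥ h) (X i))| ≤ M * L * expectedNbhdDist P μ0 ξ πs t i (g t) := by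
      rw [jointLaw_succ, ← Matrix.dotProduct_mulVec, ← dotProduct_sub, expectedNbhdDist,
        ← smul_eq_mul (M * L), ← dotProduct_smul]
      refine (abs_dotProduct_le_dotProduct_abs hp _).trans
        (dotProduct_mono_of_mem_simplex hp fun X => ?_)
      have hmarg : (jointKernel P ξ πs t *ᵥ fun Y => h (Y i)) X =
          transition P (πs i) t (empNbhd ξ X i) (X i) ⬝ᵥ h :=
        productLaw_dotProduct_eval (transition_empNbhd_mem_simplex hP hξ hπs t X) i h
      rw [Pi.abs_apply, Pi.sub_apply, hmarg, Pi.smul_apply, smul_eq_mul, mul_assoc]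
      exact abs_transition_dotProduct_sub_le hPLip (hπs i) (empNbhd_mem_subProb hξ X i) (hg t) hM
        hh t (X i)
    rw [stateLaw_succ, ← Matrix.dotProduct_mulVec, Finset.sum_range_succ, mul_add]
    exact (abs_sub_le _ _ _).trans ((add_le_add hstep (ih hKh)).trans_eq (add_comm _ _))

lemma abs_JN_sub_Jmf_le_sum (hμ0 : μ0 ∈ simplex 𝒳) (hP : IsKernel P)
    (hPLip : KernelLipschitz P L) (hL : 0 ≤ L) {Lr : ℝ} (hrLip : RewardLipschitz r Lr)
    (hM : 0 ≤ M) (hr : ∀ x u, ∀ ν ∈ subProb 𝒳, |r x u ν| ≤ M)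
    (hξ : ∀ i j, ξ i j ∈ Set.Icc (0 : ℝ) 1) (hπs : ∀ j, IsPolicy (πs j)) {g : ℕ → 𝒳 → ℝ}
    (hg : ∀ t, g t ∈ subProb 𝒳) (T : ℕ) (i : Fin N) :
    |JN T r P μ0 ξ πs i - Jmf T r P μ0 g (πs i)| ≤
      (Lr + T * (M * L)) * ∑ t ∈ Finset.range T, expectedNbhdDist P μ0 ξ πs t i (g t) := by
  set b := fun t => expectedNbhdDist P μ0 ξ πs t i (g t)
  have hb (t : ℕ) : 0 ≤ b t := expectedNbhdDist_nonneg hμ0 hP hξ hπs t i (g t)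
  have hreward (t : ℕ) : |jointLaw P μ0 ξ πs t ⬝ᵥ
      (fun X => meanReward r (πs i) t (empNbhd ξ X i) (X i)) -
        jointLaw P μ0 ξ πs t ⬝ᵥ (fun X => meanReward r (πs i) t (g t) (X i))| ≤ Lr * b t := by
    have hp := jointLaw_mem_simplex hμ0 hP hξ hπs t
    simp only [b, expectedNbhdDist]
    rw [← dotProduct_sub, ← smul_eq_mul, ← dotProduct_smul]
    exact (abs_dotProduct_le_dotProduct_abs hp _).trans <| dotProduct_mono_of_mem_simplex hp
      fun X => abs_meanReward_sub_le hrLip (hπs i) (empNbhd_mem_subProb hξ X i) (hg t) t (X i)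
  have hterm (t : ℕ) (ht : t ∈ Finset.range T) : |jointLaw P μ0 ξ πs t ⬝ᵥ
      (fun X => meanReward r (πs i) t (empNbhd ξ X i) (X i)) -
        stateLaw P μ0 g (πs i) t ⬝ᵥ meanReward r (πs i) t (g t)| ≤
      Lr * b t + M * L * ∑ s ∈ Finset.range T, b s := by
    refine (abs_sub_le _ _ _).trans (add_le_add (hreward t)
      ((abs_jointLaw_dotProduct_eval_sub_le hμ0 hP hPLip hξ hπs hg i hM
        (abs_meanReward_le hr (hπs i) (hg t) t) t).trans ?_))
    exact mul_le_mul_of_nonneg_left (Finset.sum_le_sum_of_subset_of_nonneg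
      (Finset.range_subset_range.2 (Finset.mem_range.1 ht).le) fun s _ _ => hb s) (mul_nonneg hM hL)
  rw [JN, Jmf, ← Finset.sum_sub_distrib]
  refine (Finset.abs_sum_le_sum_abs _ _).trans ((Finset.sum_le_sum hterm).trans_eq ?_)
  rw [Finset.sum_add_distrib, ← Finset.mul_sum, Finset.sum_const, Finset.card_range, nsmul_eq_mul]
  ring

theorem exists_abs_JN_sub_Jmf_le (hμ0 : μ0 ∈ simplex 𝒳) (hP : IsKernel P)
    (hPLip : KernelLipschitz P L) {Lr : ℝ} (hrLip : RewardLipschitz r Lr) (T : ℕ) :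
    ∃ C, 0 ≤ C ∧ ∀ (N : ℕ) (ξ : Fin N → Fin N → ℝ) (πs πr : Fin N → ℕ → 𝒳 → 𝒰 → ℝ)
      (G : Fin N → ℕ → 𝒳 → ℝ) (k i : Fin N), (∀ i j, ξ i j ∈ Set.Icc (0 : ℝ) 1) →
      (∀ j, IsPolicy (πs j)) → (∀ j, IsPolicy (πr j)) → (∀ j ≠ k, πs j = πr j) →
      (∀ j t, G j t ∈ subProb 𝒳) →
      |JN T r P μ0 ξ πs i - Jmf T r P μ0 (G i) (πs i)| ≤
        C * (systemError T P μ0 ξ πr G + nbhdError T P μ0 ξ πr G i) := by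
  replace hPLip := hPLip.mono (le_abs_self L)
  replace hrLip := hrLip.mono (le_abs_self Lr)
  obtain ⟨M, hM, hr⟩ := hrLip.exists_bound (abs_nonneg Lr)
  refine ⟨(|Lr| + T * (M * |L|)) * (T * (1 + Fintype.card 𝒳 *
    ((3 + |L|) * (T + 1) * (1 + |L| * Fintype.card 𝒳) ^ T))), by positivity, ?_⟩
  intro N ξ πs πr G k i hξ hπs hπr hk hG
  refine (abs_JN_sub_Jmf_le_sum hμ0 hP hPLip (abs_nonneg L) hrLip hM hr hξ hπs (hG i) T i).trans ?_
  rw [mul_assoc, mul_assoc]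
  gcongr
  refine (Finset.sum_le_card_nsmul (Finset.range T) _ _ fun t ht => expectedNbhdDist_le hμ0 hP
    hPLip (abs_nonneg L) hξ hπs hπr hk hG (Finset.mem_range.1 ht) i).trans_eq ?_
  rw [Finset.card_range, nsmul_eq_mul]

theorem exists_JN_update_le (hμ0 : μ0 ∈ simplex 𝒳) (hP : IsKernel P)
    (hPLip : KernelLipschitz P L) {Lr : ℝ} (hrLip : RewardLipschitz r Lr) (T : ℕ) :
    ∃ C, 0 ≤ C ∧ ∀ (N : ℕ) (ξ : Fin N → Fin N → ℝ) (πs : Fin N → ℕ → 𝒳 → 𝒰 → ℝ)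
      (G : Fin N → ℕ → 𝒳 → ℝ) (i : Fin N) (πd : ℕ → 𝒳 → 𝒰 → ℝ),
      (∀ i j, ξ i j ∈ Set.Icc (0 : ℝ) 1) → (∀ j, IsPolicy (πs j)) → IsPolicy πd →
      (∀ j t, G j t ∈ subProb 𝒳) → Jmf T r P μ0 (G i) πd ≤ Jmf T r P μ0 (G i) (πs i) →
      JN T r P μ0 ξ (Function.update πs i πd) i ≤ JN T r P μ0 ξ πs i +
        C * (systemError T P μ0 ξ πs G + nbhdError T P μ0 ξ πs G i) := by
  obtain ⟨C, hC, hclose⟩ := exists_abs_JN_sub_Jmf_le hμ0 hP hPLip hrLip T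
  refine ⟨2 * C, by positivity, fun N ξ πs G i πd hξ hπs hπd hG hopt => ?_⟩
  have hpolicy (j : Fin N) : IsPolicy (Function.update πs i πd j) := by
    obtain rfl | hj := eq_or_ne j i
    · rwa [Function.update_self]
    · exact (Function.update_of_ne hj πd πs).symm ▸ hπs j
  have hdev := hclose N ξ (Function.update πs i πd) πs G i i hξ hpolicy hπs
    (fun j hj => Function.update_of_ne hj πd πs) hG
  rw [Function.update_self] at hdev
  have hstay := hclose N ξ πs πs G i i hξ hπs hπs (fun _ _ => rfl) hG
  linarith [(abs_le.1 hdev).2, (abs_le.1 hstay).1]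

end JointLaw

/-! ### Step functions and step graphons -/

section StepFunction

variable {N : ℕ} {j k : Fin N} {α β B : ℝ}

/-- The `j`-th of the `N` cells of equal length that partition `(0, 1]`. -/
def cell (N : ℕ) (j : Fin N) : Set ℝ := Set.Ioc (((j : ℕ) : ℝ) / N) ((((j : ℕ) : ℝ) + 1) / N)

/-- The function on `(0, 1]` that takes the value `v j` on the `j`-th cell. -/
noncomputable def stepFun (v : Fin N → ℝ) (β : ℝ) : ℝ :=
  ∑ j, (cell N j).indicator (fun _ => v j) β

lemma measurableSet_cell (j : Fin N) : MeasurableSet (cell N j) := measurableSet_Ioc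

lemma rep_mem_Ioc (j : Fin N) : rep N j ∈ Set.Ioc (0 : ℝ) 1 := by
  have hN : (0 : ℝ) < N := Nat.cast_pos.2 j.pos
  exact ⟨by unfold rep; positivity, (div_le_one hN).2 (by exact_mod_cast j.isLt)⟩

lemma abs_rep_sub_le (hβ : β ∈ cell N j) : |rep N j - β| ≤ (N : ℝ)⁻¹ := by
  obtain ⟨hlt, hle⟩ := hβ
  rw [add_div, one_div] at hle
  rw [rep, add_div, one_div, abs_le]
  constructor <;> linarith [inv_nonneg.2 (Nat.cast_nonneg (α := ℝ) N)]

lemma exists_mem_cell (hN : N ≠ 0) (hβ : β ∈ Set.Ioc (0 : ℝ) 1) : ∃ j, β ∈ cell N j := by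
  have hN0 : (0 : ℝ) < N := Nat.cast_pos.2 (Nat.pos_of_ne_zero hN)
  obtain ⟨n, hn⟩ := Nat.exists_eq_succ_of_ne_zero (Nat.ceil_pos.2 (mul_pos hβ.1 hN0)).ne'
  obtain ⟨hlt, hle⟩ := (Nat.ceil_eq_iff n.succ_ne_zero).1 hn
  have hnN : n + 1 ≤ N := hn.ge.trans (Nat.ceil_le.2 (mul_le_of_le_one_left hN0.le hβ.2))
  refine ⟨⟨n, hnN⟩, (div_lt_iff₀ hN0).2 ?_, (le_div_iff₀ hN0).2 ?_⟩
  · simpa using hlt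
  · simpa using hle

lemma eq_of_mem_cell (hj : β ∈ cell N j) (hk : β ∈ cell N k) : j = k := by
  have hN : (0 : ℝ) < N := Nat.cast_pos.2 j.pos
  have hjk := (div_lt_div_iff_of_pos_right hN).1 (hj.1.trans_le hk.2)
  have hkj := (div_lt_div_iff_of_pos_right hN).1 (hk.1.trans_le hj.2)
  norm_cast at hjk hkj
  exact Fin.ext (by omega)

lemma stepFun_of_mem_cell (v : Fin N → ℝ) (hj : β ∈ cell N j) : stepFun v β = v j := by
  rw [stepFun, Finset.sum_eq_single_of_mem j (Finset.mem_univ j) fun k _ hk =>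
    Set.indicator_of_notMem (fun h => hk (eq_of_mem_cell h hj)) _, Set.indicator_of_mem hj]

lemma measurable_stepFun (v : Fin N → ℝ) : Measurable (stepFun v) :=
  Finset.measurable_fun_sum _ fun _ _ => measurable_const.indicator (measurableSet_cell _)

lemma abs_stepFun_le {v : Fin N → ℝ} (hB : 0 ≤ B) (hv : ∀ j, |v j| ≤ B) (β : ℝ) :
    |stepFun v β| ≤ B := by
  by_cases h : ∃ j, β ∈ cell N j
  · obtain ⟨j, hj⟩ := h
    exact (stepFun_of_mem_cell v hj).symm ▸ hv j
  · rwa [stepFun, Finset.sum_eq_zero fun j _ => Set.indicator_of_notMem (fun hj => h ⟨j, hj⟩) _,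
      abs_zero]

lemma setIntegral_stepFun (v : Fin N → ℝ) :
    ∫ β in Set.Ioc (0 : ℝ) 1, stepFun v β = (N : ℝ)⁻¹ * ∑ j, v j := by
  have hcell (j : Fin N) : cell N j ⊆ Set.Ioc 0 1 :=
    Set.Ioc_subset_Ioc (by positivity) (rep_mem_Ioc j).2
  have hvol (j : Fin N) : volume.real (cell N j) = (N : ℝ)⁻¹ := by
    rw [cell, Real.volume_real_Ioc, add_div, add_sub_cancel_left, one_div,
      max_eq_left (inv_nonneg.2 N.cast_nonneg)]
  simp only [stepFun]
  rw [integral_finsetSum _ fun j _ => (integrable_const _).indicator (measurableSet_cell j),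
    Finset.mul_sum]
  refine Finset.sum_congr rfl fun j _ => ?_
  rw [setIntegral_indicator (measurableSet_cell j), Set.inter_eq_right.2 (hcell j),
    setIntegral_const, hvol, smul_eq_mul]

lemma stepGraphon_eq_stepFun (ξ : Fin N → Fin N → ℝ) (α β : ℝ) :
    stepGraphon ξ α β = stepFun (fun i => stepFun (ξ i) β) α := by
  simp only [stepGraphon, stepFun, Set.indicator_apply, cell, Set.mem_Ioc, ite_mul, one_mul,
    zero_mul, Finset.sum_ite_irrel, Finset.sum_const_zero]

lemma stepGraphon_of_mem_cell (ξ : Fin N → Fin N → ℝ) {i : Fin N} (hα : α ∈ cell N i) :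
    stepGraphon ξ α = stepFun (ξ i) :=
  funext fun β => (stepGraphon_eq_stepFun ξ α β).trans (stepFun_of_mem_cell _ hα)

lemma measurable_uncurry_stepGraphon (ξ : Fin N → Fin N → ℝ) :
    Measurable (Function.uncurry (stepGraphon ξ)) := by
  simp only [Function.uncurry_def, stepGraphon_eq_stepFun]
  exact Finset.measurable_fun_sum _ fun i _ =>
    ((measurable_stepFun (ξ i)).comp measurable_snd).indicator
      (measurable_fst (measurableSet_cell i))

/-- The step function that samples `m` at the right endpoints of the `N` cells. -/
noncomputable def sample (N : ℕ) (m : ℝ → ℝ) : ℝ → ℝ := stepFun fun j : Fin N => m (rep N j)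

lemma measurable_sample (N : ℕ) (m : ℝ → ℝ) : Measurable (sample N m) := measurable_stepFun _

lemma abs_sample_le {m : ℝ → ℝ} (hB : 0 ≤ B) (hm : ∀ β ∈ Set.Ioc (0 : ℝ) 1, |m β| ≤ B) (N : ℕ)
    (β : ℝ) : |sample N m β| ≤ B :=
  abs_stepFun_le hB (fun j => hm _ (rep_mem_Ioc j)) β

lemma tendsto_sample {m : ℝ → ℝ} (hβ : β ∈ Set.Ioc (0 : ℝ) 1)
    (hm : ContinuousWithinAt m (Set.Ioc 0 1) β) :
    Tendsto (fun N => sample N m β) atTop (𝓝 (m β)) := by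
  rw [Metric.tendsto_atTop]
  intro ε hε
  obtain ⟨δ, hδ, hcont⟩ := Metric.continuousWithinAt_iff.1 hm ε hε
  obtain ⟨n, hn⟩ := eventually_atTop.1
    ((tendsto_inv_atTop_nhds_zero_nat (𝕜 := ℝ)).eventually_lt_const hδ)
  refine ⟨n + 1, fun N hN => ?_⟩
  obtain ⟨j, hj⟩ := exists_mem_cell (Nat.ne_of_gt (n.succ_pos.trans_le hN)) hβ
  rw [sample, stepFun_of_mem_cell _ hj]
  exact hcont (rep_mem_Ioc j) ((abs_rep_sub_le hj).trans_lt (hn N (Nat.le_of_succ_le hN)))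

lemma tendsto_setIntegral_abs_sample_sub {m : ℝ → ℝ} (hm : Measurable m)
    (hB : ∀ β ∈ Set.Ioc (0 : ℝ) 1, |m β| ≤ B)
    (hcont : ∀ᵐ β ∂volume.restrict (Set.Ioc (0 : ℝ) 1), ContinuousWithinAt m (Set.Ioc 0 1) β) :
    Tendsto (fun N => ∫ β in Set.Ioc (0 : ℝ) 1, |sample N m β - m β|) atTop (𝓝 0) := by
  have hB0 : 0 ≤ B := (abs_nonneg _).trans (hB 1 ⟨one_pos, le_rfl⟩)
  have hbound (N : ℕ) : ∀ᵐ β ∂volume.restrict (Set.Ioc (0 : ℝ) 1),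
      ‖|sample N m β - m β|‖ ≤ B + B := by
    filter_upwards [ae_restrict_mem measurableSet_Ioc] with β hβ
    rw [Real.norm_eq_abs, abs_abs]
    exact (abs_sub _ _).trans (add_le_add (abs_sample_le hB0 hB N β) (hB β hβ))
  have hlim : ∀ᵐ β ∂volume.restrict (Set.Ioc (0 : ℝ) 1),
      Tendsto (fun N => |sample N m β - m β|) atTop (𝓝 0) := by
    filter_upwards [ae_restrict_mem measurableSet_Ioc, hcont] with β hβ hmβ
    simpa only [sub_self, abs_zero] using ((tendsto_sample hβ hmβ).sub_const (m β)).abs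
  simpa only [integral_zero] using tendsto_integral_of_dominated_convergence
    (F := fun N β => |sample N m β - m β|) (fun _ => B + B)
    (fun N => ((measurable_sample N m).sub hm).norm.aestronglyMeasurable) (integrable_const _)
    hbound hlim

end StepFunction

/-! ### Graphon operators -/

section GraphonOp

variable {W : ℝ → ℝ → ℝ} {m m' : ℝ → ℝ} {α : ℝ}

/-- The integral operator with kernel `W` on functions on `(0, 1]`. -/
noncomputable def graphonOp (W : ℝ → ℝ → ℝ) (m : ℝ → ℝ) (α : ℝ) : ℝ :=
  ∫ β in Set.Ioc (0 : ℝ) 1, W α β * m β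

lemma integrableOn_Ioc_of_abs_le {B : ℝ} (hm : Measurable m)
    (hB : ∀ β ∈ Set.Ioc (0 : ℝ) 1, |m β| ≤ B) : IntegrableOn m (Set.Ioc 0 1) :=
  Integrable.of_bound hm.aestronglyMeasurable B
    ((ae_restrict_mem measurableSet_Ioc).mono fun β hβ => hB β hβ)

lemma abs_mul_le_one {a b : ℝ} (ha : |a| ≤ 1) (hb : |b| ≤ 1) : |a * b| ≤ 1 :=
  (abs_mul a b).trans_le (mul_le_one₀ ha (abs_nonneg b) hb)

lemma measurable_graphonOp (hW : Measurable (Function.uncurry W)) (hm : Measurable m) :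
    Measurable (graphonOp W m) :=
  (hW.mul (hm.comp measurable_snd)).stronglyMeasurable.integral_prod_right.measurable

lemma integrableOn_graphon_mul (hW : Measurable (Function.uncurry W)) (hW1 : ∀ a b, |W a b| ≤ 1)
    (hm : Measurable m) (hm1 : ∀ β ∈ Set.Ioc (0 : ℝ) 1, |m β| ≤ 1) (α : ℝ) :
    IntegrableOn (fun β => W α β * m β) (Set.Ioc 0 1) :=
  integrableOn_Ioc_of_abs_le (hW.of_uncurry_left.mul hm) fun β hβ =>
    abs_mul_le_one (hW1 α β) (hm1 β hβ)

lemma abs_graphonOp_le_one (hW1 : ∀ a b, |W a b| ≤ 1)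
    (hm1 : ∀ β ∈ Set.Ioc (0 : ℝ) 1, |m β| ≤ 1) (α : ℝ) : |graphonOp W m α| ≤ 1 := by
  simpa [graphonOp] using norm_setIntegral_le_of_norm_le_const (f := fun β => W α β * m β)
    (measure_Ioc_lt_top (μ := volume) (a := (0 : ℝ)) (b := 1))
    fun β hβ => abs_mul_le_one (hW1 α β) (hm1 β hβ)

lemma abs_graphonOp_sub_le (hW : Measurable (Function.uncurry W)) (hW1 : ∀ a b, |W a b| ≤ 1)
    (hm : Measurable m) (hm1 : ∀ β ∈ Set.Ioc (0 : ℝ) 1, |m β| ≤ 1) (hm' : Measurable m')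
    (hm1' : ∀ β ∈ Set.Ioc (0 : ℝ) 1, |m' β| ≤ 1) (α : ℝ) :
    |graphonOp W m α - graphonOp W m' α| ≤ ∫ β in Set.Ioc (0 : ℝ) 1, |m β - m' β| := by
  rw [graphonOp, graphonOp, ← integral_sub (integrableOn_graphon_mul hW hW1 hm hm1 α)
    (integrableOn_graphon_mul hW hW1 hm' hm1' α)]
  have hint : IntegrableOn (fun β => |m β - m' β|) (Set.Ioc 0 1) :=
    ((integrableOn_Ioc_of_abs_le hm hm1).sub (integrableOn_Ioc_of_abs_le hm' hm1')).abs
  refine norm_integral_le_of_norm_le (f := fun β => W α β * m β - W α β * m' β) hint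
    (Eventually.of_forall fun β => ?_)
  rw [← mul_sub, norm_mul]
  exact mul_le_of_le_one_left (norm_nonneg _) (hW1 α β)

lemma continuousWithinAt_graphonOp (hW : Measurable (Function.uncurry W))
    (hW1 : ∀ a b, |W a b| ≤ 1) (hm : Measurable m)
    (hm1 : ∀ β ∈ Set.Ioc (0 : ℝ) 1, |m β| ≤ 1)
    (hcont : ∀ᵐ β ∂volume.restrict (Set.Ioc (0 : ℝ) 1),
      ContinuousWithinAt (fun a => W a β) (Set.Ioc 0 1) α) :
    ContinuousWithinAt (graphonOp W m) (Set.Ioc 0 1) α := by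
  refine continuousWithinAt_of_dominated (bound := fun _ => 1)
    (Eventually.of_forall fun a => (integrableOn_graphon_mul hW hW1 hm hm1 a).1)
    (Eventually.of_forall fun a => ?_) (integrable_const _)
    (hcont.mono fun β hβ => hβ.mul_const _)
  exact (ae_restrict_mem measurableSet_Ioc).mono fun β hβ => abs_mul_le_one (hW1 a β) (hm1 β hβ)

lemma OpConvergesTo.tendsto {WN : ℕ → ℝ → ℝ → ℝ} (hconv : OpConvergesTo WN W)
    (hWN : ∀ N, Measurable (Function.uncurry (WN N))) (hWN1 : ∀ N a b, |WN N a b| ≤ 1)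
    (hW : Measurable (Function.uncurry W)) (hW1 : ∀ a b, |W a b| ≤ 1) {g : ℕ → ℝ → ℝ}
    (hg : ∀ N, Measurable (g N)) (hg1 : ∀ N β, |g N β| ≤ 1) :
    Tendsto (fun N => ∫ α in Set.Ioc (0 : ℝ) 1,
      |graphonOp (WN N) (g N) α - graphonOp W (g N) α|) atTop (𝓝 0) := by
  rw [Metric.tendsto_atTop]
  intro ε hε
  obtain ⟨N₀, hN₀⟩ := hconv (ε / 2) (half_pos hε)
  refine ⟨N₀, fun N hN => ?_⟩
  have hsub (α : ℝ) : graphonOp (WN N) (g N) α - graphonOp W (g N) α =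
      ∫ β in Set.Ioc (0 : ℝ) 1, (WN N α β - W α β) * g N β := by
    simp only [sub_mul]
    exact (integral_sub (integrableOn_graphon_mul (hWN N) (hWN1 N) (hg N) (fun β _ => hg1 N β) α)
      (integrableOn_graphon_mul hW hW1 (hg N) (fun β _ => hg1 N β) α)).symm
  simp only [hsub]
  rw [Real.dist_0_eq_abs, abs_of_nonneg (integral_nonneg fun _ => abs_nonneg _)]
  exact (hN₀ N hN (g N) (hg N) (hg1 N)).trans_lt (half_lt_self hε)

variable {N : ℕ} {ξ : Fin N → Fin N → ℝ}

lemma abs_stepGraphon_le_one (hξ : ∀ i j, |ξ i j| ≤ 1) (α β : ℝ) : |stepGraphon ξ α β| ≤ 1 := by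
  rw [stepGraphon_eq_stepFun]
  exact abs_stepFun_le zero_le_one (fun i => abs_stepFun_le zero_le_one (hξ i) β) α

lemma graphonOp_stepGraphon_stepFun (ξ : Fin N → Fin N → ℝ) (v : Fin N → ℝ) {i : Fin N}
    (hα : α ∈ cell N i) :
    graphonOp (stepGraphon ξ) (stepFun v) α = (N : ℝ)⁻¹ * ∑ j, ξ i j * v j := by
  rw [graphonOp, stepGraphon_of_mem_cell ξ hα, ← setIntegral_stepFun]
  refine setIntegral_congr_fun measurableSet_Ioc fun β hβ => ?_
  obtain ⟨j, hj⟩ := exists_mem_cell i.pos.ne' hβ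
  simp only [stepFun_of_mem_cell _ hj]

lemma average_abs_sub_eq_setIntegral (hN : N ≠ 0) (ξ : Fin N → Fin N → ℝ) (m G : ℝ → ℝ) :
    (N : ℝ)⁻¹ * ∑ i, |(N : ℝ)⁻¹ * ∑ j, ξ i j * m (rep N j) - G (rep N i)| =
      ∫ α in Set.Ioc (0 : ℝ) 1, |graphonOp (stepGraphon ξ) (sample N m) α - sample N G α| := by
  rw [← setIntegral_stepFun]
  refine setIntegral_congr_fun measurableSet_Ioc fun α hα => ?_
  obtain ⟨i, hi⟩ := exists_mem_cell hN hα
  simp only [sample, stepFun_of_mem_cell _ hi, graphonOp_stepGraphon_stepFun _ _ hi]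

lemma integrableOn_graphonOp (hW : Measurable (Function.uncurry W)) (hW1 : ∀ a b, |W a b| ≤ 1)
    (hm : Measurable m) (hm1 : ∀ β ∈ Set.Ioc (0 : ℝ) 1, |m β| ≤ 1) :
    IntegrableOn (graphonOp W m) (Set.Ioc 0 1) :=
  integrableOn_Ioc_of_abs_le (measurable_graphonOp hW hm) fun α _ => abs_graphonOp_le_one hW1 hm1 α

lemma average_abs_sub_graphonOp_le (hN : N ≠ 0) (hξ : ∀ i j, |ξ i j| ≤ 1)
    (hW : Measurable (Function.uncurry W)) (hW1 : ∀ a b, |W a b| ≤ 1)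
    (hm : Measurable m) (hm1 : ∀ β ∈ Set.Ioc (0 : ℝ) 1, |m β| ≤ 1) :
    (N : ℝ)⁻¹ * ∑ i, |(N : ℝ)⁻¹ * ∑ j, ξ i j * m (rep N j) - graphonOp W m (rep N i)| ≤
      (∫ α in Set.Ioc (0 : ℝ) 1,
        |graphonOp (stepGraphon ξ) (sample N m) α - graphonOp W (sample N m) α|) +
      (∫ α in Set.Ioc (0 : ℝ) 1, |sample N (graphonOp W m) α - graphonOp W m α|) +
      ∫ β in Set.Ioc (0 : ℝ) 1, |sample N m β - m β| := by
  set c := ∫ β in Set.Ioc (0 : ℝ) 1, |sample N m β - m β|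
  have hs := measurable_sample N m
  have hs1 (β : ℝ) (_ : β ∈ Set.Ioc (0 : ℝ) 1) : |sample N m β| ≤ 1 :=
    abs_sample_le zero_le_one hm1 N β
  have hstep := integrableOn_graphonOp (measurable_uncurry_stepGraphon ξ)
    (abs_stepGraphon_le_one hξ) hs hs1
  have hsample : IntegrableOn (sample N (graphonOp W m)) (Set.Ioc 0 1) :=
    integrableOn_Ioc_of_abs_le (measurable_sample N _) fun α _ =>
      abs_sample_le zero_le_one (fun α _ => abs_graphonOp_le_one hW1 hm1 α) N α
  have hker : IntegrableOn (fun α => |graphonOp (stepGraphon ξ) (sample N m) α -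
      graphonOp W (sample N m) α|) (Set.Ioc 0 1) :=
    (hstep.sub (integrableOn_graphonOp hW hW1 hs hs1)).abs
  have hout : IntegrableOn (fun α => |sample N (graphonOp W m) α - graphonOp W m α|)
      (Set.Ioc 0 1) := (hsample.sub (integrableOn_graphonOp hW hW1 hm hm1)).abs
  have hc : IntegrableOn (fun _ => c) (Set.Ioc (0 : ℝ) 1) := integrable_const c
  have htriangle (α : ℝ) :
      |graphonOp (stepGraphon ξ) (sample N m) α - sample N (graphonOp W m) α| ≤
        |graphonOp (stepGraphon ξ) (sample N m) α - graphonOp W (sample N m) α| +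
          |sample N (graphonOp W m) α - graphonOp W m α| + c := by
    have hin := abs_graphonOp_sub_le hW hW1 hs hs1 hm hm1 α
    have hfst := abs_sub_le (graphonOp (stepGraphon ξ) (sample N m) α)
      (graphonOp W (sample N m) α) (sample N (graphonOp W m) α)
    have hsnd := abs_sub_le (graphonOp W (sample N m) α) (graphonOp W m α)
      (sample N (graphonOp W m) α)
    rw [abs_sub_comm (graphonOp W m α)] at hsnd
    linarith
  rw [average_abs_sub_eq_setIntegral hN]
  refine (integral_mono (hstep.sub hsample).abs ((hker.add hout).add hc) htriangle).trans_eq ?_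
  rw [integral_add' (hker.add hout) hc, integral_add' hker hout]
  simp

theorem tendsto_average_abs_sub_graphonOp {ξ : (N : ℕ) → Fin N → Fin N → ℝ}
    (hconv : OpConvergesTo (fun N => stepGraphon (ξ N)) W) (hξ : ∀ N i j, |ξ N i j| ≤ 1)
    (hW : Measurable (Function.uncurry W)) (hW1 : ∀ a b, |W a b| ≤ 1)
    (hWcont : ∀ᵐ α ∂volume.restrict (Set.Ioc (0 : ℝ) 1),
      ∀ᵐ β ∂volume.restrict (Set.Ioc (0 : ℝ) 1),
        ContinuousWithinAt (fun a => W a β) (Set.Ioc 0 1) α)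
    (hm : Measurable m) (hm1 : ∀ β ∈ Set.Ioc (0 : ℝ) 1, |m β| ≤ 1)
    (hmcont : ∀ᵐ β ∂volume.restrict (Set.Ioc (0 : ℝ) 1),
      ContinuousWithinAt m (Set.Ioc 0 1) β) :
    Tendsto (fun N : ℕ => (N : ℝ)⁻¹ * ∑ i,
      |(N : ℝ)⁻¹ * ∑ j, ξ N i j * m (rep N j) - graphonOp W m (rep N i)|) atTop (𝓝 0) := by
  have hker := hconv.tendsto (fun N => measurable_uncurry_stepGraphon (ξ N))
    (fun N => abs_stepGraphon_le_one (hξ N)) hW hW1 (fun N => measurable_sample N m)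
    (abs_sample_le zero_le_one hm1)
  have hin := tendsto_setIntegral_abs_sample_sub hm hm1 hmcont
  have hout := tendsto_setIntegral_abs_sample_sub (measurable_graphonOp hW hm)
    (fun α _ => abs_graphonOp_le_one hW1 hm1 α)
    (hWcont.mono fun α => continuousWithinAt_graphonOp hW hW1 hm hm1)
  have hbound := (hker.add hout).add hin
  rw [add_zero, add_zero] at hbound
  refine squeeze_zero' (Eventually.of_forall fun N => by positivity) ?_ hbound
  filter_upwards [eventually_ne_atTop 0] with N hN
  exact average_abs_sub_graphonOp_le hN (hξ N) hW hW1 hm hm1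

end GraphonOp

/-! ### Mean fields -/

section MeanField

lemma continuousWithinAt_of_abs_sub_le {X : Type*} [TopologicalSpace X] {f b : X → ℝ} {s : Set X}
    {x : X} (hb : Continuous b) (hbx : b x = 0) (hf : ∀ᶠ y in 𝓝[s] x, |f y - f x| ≤ b y) :
    ContinuousWithinAt f s x :=
  tendsto_sub_nhds_zero_iff.1 (squeeze_zero_norm' hf (hbx ▸ hb.continuousWithinAt))

lemma abs_le_one_of_mem_Icc {a : ℝ} (ha : a ∈ Set.Icc (0 : ℝ) 1) : |a| ≤ 1 :=
  (abs_of_nonneg ha.1).trans_le ha.2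

lemma IsEdgeWeights.mem_Icc {N : ℕ} {ξ : Fin N → Fin N → ℝ} (hξ : IsEdgeWeights ξ) (i j : Fin N) :
    ξ i j ∈ Set.Icc (0 : ℝ) 1 := by
  obtain h | h := hξ.1 i j <;> simp [h]

lemma GraphonLipschitz.ae_continuousWithinAt {W : ℝ → ℝ → ℝ} {L : ℝ} (hW : GraphonLipschitz W L) :
    ∀ᵐ α ∂volume.restrict (Set.Ioc (0 : ℝ) 1), ∀ᵐ β ∂volume.restrict (Set.Ioc (0 : ℝ) 1),
      ContinuousWithinAt (fun a => W a β) (Set.Ioc 0 1) α := by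
  filter_upwards [ae_restrict_mem measurableSet_Ioc] with α hα
  filter_upwards [ae_restrict_mem measurableSet_Ioc] with β hβ
  refine continuousWithinAt_of_abs_sub_le (b := fun a => L * (|a - α| + |β - β|)) (by fun_prop)
    (by simp) ?_
  filter_upwards [self_mem_nhdsWithin] with a ha
  exact hW a β α β (Set.Ioc_subset_Icc_self ha) (Set.Ioc_subset_Icc_self hβ)
    (Set.Ioc_subset_Icc_self hα) (Set.Ioc_subset_Icc_self hβ)

variable [Fintype 𝒳] [Fintype 𝒰] {W : ℝ → ℝ → ℝ} {P : 𝒳 → 𝒰 → (𝒳 → ℝ) → 𝒳 → ℝ} {μ0 : 𝒳 → ℝ}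
  {πe : ℝ → ℕ → 𝒳 → 𝒰 → ℝ} {μ : ℕ → ℝ → 𝒳 → ℝ} {α L : ℝ}

lemma EnsembleLipschitzUpTo.ae_continuousWithinAt (hπ : EnsembleLipschitzUpTo πe) (t : ℕ) (x : 𝒳)
    (u : 𝒰) : ∀ᵐ α ∂volume.restrict (Set.Ioc (0 : ℝ) 1),
      ContinuousWithinAt (fun a => πe a t x u) (Set.Ioc 0 1) α := by
  obtain ⟨L, D, hL⟩ := hπ
  filter_upwards [ae_restrict_mem measurableSet_Ioc,
    ae_restrict_of_ae (D.countable_toSet.ae_notMem volume)] with α hα hαD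
  have hsep : ∀ᶠ a in 𝓝 α, ∀ d ∈ D, d ∉ Set.uIcc a α := by
    refine (eventually_all_finset D).2 fun d hd => ?_
    obtain hlt | hgt := lt_or_gt_of_ne (ne_of_mem_of_not_mem (Finset.mem_coe.2 hd) hαD)
    · filter_upwards [eventually_gt_nhds hlt] with a ha using Set.notMem_uIcc_of_lt ha hlt
    · filter_upwards [eventually_lt_nhds hgt] with a ha using Set.notMem_uIcc_of_gt ha hgt
  refine continuousWithinAt_of_abs_sub_le (b := fun a => L * |a - α|) (by fun_prop) (by simp) ?_
  filter_upwards [self_mem_nhdsWithin, nhdsWithin_le_nhds hsep] with a ha hsep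
  exact hL t x u a (Set.Ioc_subset_Icc_self ha) α (Set.Ioc_subset_Icc_self hα) hsep

lemma KernelLipschitz.continuousOn (hP : KernelLipschitz P L) (x : 𝒳) (u : 𝒰) (x' : 𝒳) :
    ContinuousOn (fun ν => P x u ν x') (subProb 𝒳) := by
  intro ν hν
  refine continuousWithinAt_of_abs_sub_le (b := fun ν' => L * l1dist ν' ν)
    (by unfold l1dist; fun_prop) (by simp [l1dist]) ?_
  filter_upwards [self_mem_nhdsWithin] with ν' hν'
  exact (Finset.single_le_sum (f := fun y => |P x u ν' y - P x u ν y|) (fun _ _ => abs_nonneg _)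
    (Finset.mem_univ x')).trans (hP x u ν' ν hν' hν)

lemma nbhd_mem_subProb {ν : ℝ → 𝒳 → ℝ} (hW : Measurable (Function.uncurry W))
    (hW01 : ∀ a b, W a b ∈ Set.Icc (0 : ℝ) 1) (hνm : ∀ x, Measurable fun β => ν β x)
    (hν : ∀ β ∈ Set.Ioc (0 : ℝ) 1, ν β ∈ simplex 𝒳) (α : ℝ) : nbhd W ν α ∈ subProb 𝒳 := by
  have hint (x : 𝒳) : IntegrableOn (fun β => W α β * ν β x) (Set.Ioc 0 1) :=
    integrableOn_graphon_mul hW (fun a b => abs_le_one_of_mem_Icc (hW01 a b)) (hνm x)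
      (fun β hβ => abs_le_one_of_mem_simplex (hν β hβ) x) α
  refine ⟨fun x => setIntegral_nonneg measurableSet_Ioc fun β hβ =>
    mul_nonneg (hW01 α β).1 ((hν β hβ).1 x), ?_⟩
  calc ∑ x, nbhd W ν α x = ∫ β in Set.Ioc (0 : ℝ) 1, ∑ x, W α β * ν β x :=
        (integral_finsetSum _ fun x _ => hint x).symm
    _ ≤ ∫ _ in Set.Ioc (0 : ℝ) 1, 1 := by
        refine setIntegral_mono_on (integrable_finsetSum _ fun x _ => hint x) (integrable_const 1)
          measurableSet_Ioc fun β hβ => ?_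
        rw [← Finset.mul_sum, (hν β hβ).2, mul_one]
        exact (hW01 α β).2
    _ = 1 := by simp

lemma IsMeanFieldOf.succ_eq (hμ : IsMeanFieldOf W P μ0 πe μ) (hα : α ∈ Set.Icc (0 : ℝ) 1) (t : ℕ) :
    μ (t + 1) α = μ t α ᵥ* transition P (πe α) t (nbhd W (μ t) α) :=
  funext (hμ.2.2 t α hα)

lemma IsMeanFieldOf.eq_stateLaw (hμ : IsMeanFieldOf W P μ0 πe μ) (hα : α ∈ Set.Icc (0 : ℝ) 1)
    (t : ℕ) : μ t α = stateLaw P μ0 (fun s => nbhd W (μ s) α) (πe α) t := by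
  induction t with
  | zero => exact hμ.2.1 α hα
  | succ t ih => rw [hμ.succ_eq hα, stateLaw_succ, ih]

lemma IsMeanFieldOf.mem_simplex (hμ : IsMeanFieldOf W P μ0 πe μ) (hμ0 : μ0 ∈ simplex 𝒳)
    (hP : IsKernel P) (hW : Measurable (Function.uncurry W))
    (hW01 : ∀ a b, W a b ∈ Set.Icc (0 : ℝ) 1) (hπ : ∀ α ∈ Set.Icc (0 : ℝ) 1, IsPolicy (πe α))
    (t : ℕ) : ∀ α ∈ Set.Icc (0 : ℝ) 1, μ t α ∈ simplex 𝒳 := by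
  induction t with
  | zero => exact fun α hα => (hμ.2.1 α hα).symm ▸ hμ0
  | succ t ih =>
    intro α hα
    rw [hμ.succ_eq hα]
    exact vecMul_mem_simplex (ih α hα) (transition_mem_simplex hP (hπ α hα)
      (nbhd_mem_subProb hW hW01 (hμ.1 t) (fun β hβ => ih β (Set.Ioc_subset_Icc_self hβ)) α) t)

lemma IsMeanFieldOf.continuousWithinAt (hμ : IsMeanFieldOf W P μ0 πe μ)
    (hPLip : KernelLipschitz P L) (hW : Measurable (Function.uncurry W))
    (hW01 : ∀ a b, W a b ∈ Set.Icc (0 : ℝ) 1)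
    (hμs : ∀ t, ∀ α ∈ Set.Ioc (0 : ℝ) 1, μ t α ∈ simplex 𝒳) (hα : α ∈ Set.Ioc (0 : ℝ) 1)
    (hWα : ∀ᵐ β ∂volume.restrict (Set.Ioc (0 : ℝ) 1),
      ContinuousWithinAt (fun a => W a β) (Set.Ioc 0 1) α)
    (hπα : ∀ t x u, ContinuousWithinAt (fun a => πe a t x u) (Set.Ioc 0 1) α) (t : ℕ) :
    ∀ x, ContinuousWithinAt (fun a => μ t a x) (Set.Ioc 0 1) α := by
  induction t with
  | zero =>
    intro x
    have hcongr (a : ℝ) (ha : a ∈ Set.Ioc (0 : ℝ) 1) : μ 0 a x = μ0 x :=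
      congrFun (hμ.2.1 a (Set.Ioc_subset_Icc_self ha)) x
    exact continuousWithinAt_const.congr hcongr (hcongr α hα)
  | succ t ih =>
    intro x'
    have hnbhd : ContinuousWithinAt (nbhd W (μ t)) (Set.Ioc 0 1) α :=
      continuousWithinAt_pi.2 fun x => continuousWithinAt_graphonOp hW
        (fun a b => abs_le_one_of_mem_Icc (hW01 a b)) (hμ.1 t x)
        (fun β hβ => abs_le_one_of_mem_simplex (hμs t β hβ) x) hWα
    have hsub (a : ℝ) : nbhd W (μ t) a ∈ subProb 𝒳 := nbhd_mem_subProb hW hW01 (hμ.1 t) (hμs t) a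
    have hkernel (x : 𝒳) (u : 𝒰) :
        ContinuousWithinAt (fun a => P x u (nbhd W (μ t) a) x') (Set.Ioc 0 1) α :=
      (hPLip.continuousOn x u x' _ (hsub α)).comp hnbhd fun a _ => hsub a
    have hcongr (a : ℝ) (ha : a ∈ Set.Ioc (0 : ℝ) 1) := hμ.2.2 t a (Set.Ioc_subset_Icc_self ha) x'
    have hsum : ContinuousWithinAt (fun a => ∑ x, μ t a x *
        ∑ u, πe a t x u * P x u (nbhd W (μ t) a) x') (Set.Ioc 0 1) α :=
      tendsto_finsetSum _ fun x _ => (ih x).mul (tendsto_finsetSum _ fun u _ =>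
        (hπα t x u).mul (hkernel x u))
    exact hsum.congr hcongr (hcongr α hα)

/-- The neighborhood mean fields that the limit system assigns to the agents `1, …, N`. -/
noncomputable def limitNbhd (W : ℝ → ℝ → ℝ) (μ : ℕ → ℝ → 𝒳 → ℝ) (N : ℕ) (j : Fin N) (t : ℕ) :
    𝒳 → ℝ :=
  nbhd W (μ t) (rep N j)

lemma IsMeanFieldOf.average_nbhdError_eq (hμ : IsMeanFieldOf W P μ0 πe μ) (T N : ℕ)
    (ξ : Fin N → Fin N → ℝ) :
    (N : ℝ)⁻¹ * ∑ i, nbhdError T P μ0 ξ (gammaN πe N) (limitNbhd W μ N) i =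
      ∑ t ∈ Finset.range T, ∑ x, (N : ℝ)⁻¹ * ∑ i, |(N : ℝ)⁻¹ * ∑ j, ξ i j * μ t (rep N j) x -
        graphonOp W (fun β => μ t β x) (rep N i)| := by
  have hlaw (t : ℕ) (j : Fin N) :
      stateLaw P μ0 (limitNbhd W μ N j) (gammaN πe N j) t = μ t (rep N j) :=
    (hμ.eq_stateLaw (Set.Ioc_subset_Icc_self (rep_mem_Ioc j)) t).symm
  simp only [nbhdError, hlaw, l1dist, avgNbhd, limitNbhd, nbhd, graphonOp, Finset.mul_sum]
  rw [Finset.sum_comm]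
  exact Finset.sum_congr rfl fun t _ => Finset.sum_comm

theorem IsMeanFieldOf.tendsto_average_nbhdError (hμ : IsMeanFieldOf W P μ0 πe μ)
    (hμ0 : μ0 ∈ simplex 𝒳) (hP : IsKernel P) (hPLip : KernelLipschitz P L)
    (hW : Measurable (Function.uncurry W)) (hW01 : ∀ a b, W a b ∈ Set.Icc (0 : ℝ) 1)
    (hWcont : ∀ᵐ α ∂volume.restrict (Set.Ioc (0 : ℝ) 1),
      ∀ᵐ β ∂volume.restrict (Set.Ioc (0 : ℝ) 1),
        ContinuousWithinAt (fun a => W a β) (Set.Ioc 0 1) α)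
    {ξ : (N : ℕ) → Fin N → Fin N → ℝ} (hξ : ∀ N i j, ξ N i j ∈ Set.Icc (0 : ℝ) 1)
    (hconv : OpConvergesTo (fun N => stepGraphon (ξ N)) W)
    (hπ : ∀ α ∈ Set.Icc (0 : ℝ) 1, IsPolicy (πe α))
    (hπcont : ∀ t x u, ∀ᵐ α ∂volume.restrict (Set.Ioc (0 : ℝ) 1),
      ContinuousWithinAt (fun a => πe a t x u) (Set.Ioc 0 1) α) (T : ℕ) :
    Tendsto (fun N : ℕ => (N : ℝ)⁻¹ * ∑ i,
      nbhdError T P μ0 (ξ N) (gammaN πe N) (limitNbhd W μ N) i) atTop (𝓝 0) := by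
  have hμs (t : ℕ) (α : ℝ) (hα : α ∈ Set.Ioc (0 : ℝ) 1) : μ t α ∈ simplex 𝒳 :=
    hμ.mem_simplex hμ0 hP hW hW01 hπ t α (Set.Ioc_subset_Icc_self hα)
  have hμcont (t : ℕ) (x : 𝒳) : ∀ᵐ α ∂volume.restrict (Set.Ioc (0 : ℝ) 1),
      ContinuousWithinAt (fun a => μ t a x) (Set.Ioc 0 1) α := by
    filter_upwards [ae_restrict_mem measurableSet_Ioc, hWcont, ae_all_iff.2 fun t =>
      ae_all_iff.2 fun x => ae_all_iff.2 (hπcont t x)] with α hα hWα hπα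
    exact hμ.continuousWithinAt hPLip hW hW01 hμs hα hWα hπα t x
  have hlim (t : ℕ) (x : 𝒳) := tendsto_average_abs_sub_graphonOp hconv
    (fun N i j => abs_le_one_of_mem_Icc (hξ N i j)) hW
    (fun a b => abs_le_one_of_mem_Icc (hW01 a b)) hWcont (hμ.1 t x)
    (fun β hβ => abs_le_one_of_mem_simplex (hμs t β hβ) x) (hμcont t x)
  simpa only [hμ.average_nbhdError_eq, Finset.sum_const_zero] using
    tendsto_finsetSum (Finset.range T) fun t _ => tendsto_finsetSum Finset.univ fun x _ => hlim t x

end MeanField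

/-! ### Approximate equilibria -/

-- Markov's inequality for the uniform distribution on `Fin N`.
lemma floor_le_card_filter_le {N : ℕ} {e : Fin N → ℝ} {δ p : ℝ} (he : ∀ i, 0 ≤ e i) (hδ : 0 < δ)
    (hmean : (N : ℝ)⁻¹ * ∑ i, e i ≤ p * δ) :
    ⌊(1 - p) * (N : ℝ)⌋ ≤ ((Finset.univ.filter (e · ≤ δ)).card : ℤ) := by
  obtain rfl | hN := N.eq_zero_or_pos
  · simp
  have hbad : ((Finset.univ.filter (¬e · ≤ δ)).card : ℝ) * δ ≤ p * N * δ := by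
    calc _ ≤ ∑ i with ¬e i ≤ δ, e i := by
          rw [← nsmul_eq_mul]
          exact Finset.card_nsmul_le_sum _ _ _ fun i hi => (not_le.1 (Finset.mem_filter.1 hi).2).le
      _ ≤ ∑ i, e i := Finset.sum_le_univ_sum_of_nonneg he
      _ ≤ N * (p * δ) := (inv_mul_le_iff₀ (Nat.cast_pos.2 hN)).1 hmean
      _ = p * N * δ := by ring
  have hcard : ((Finset.univ.filter (e · ≤ δ)).card : ℝ) + (Finset.univ.filter (¬e · ≤ δ)).card =
      N := by
    exact_mod_cast (Finset.card_filter_add_card_filter_not (s := Finset.univ) (e · ≤ δ)).trans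
      (Finset.card_fin N)
  refine (Int.cast_le (R := ℝ)).1 ((Int.floor_le _).trans ?_)
  push_cast
  linarith [le_of_mul_le_mul_right hbad hδ]

lemma tendsto_systemError {𝒳 𝒰 : Type*} [Fintype 𝒳] [Fintype 𝒰] {T : ℕ}
    {P : 𝒳 → 𝒰 → (𝒳 → ℝ) → 𝒳 → ℝ} {μ0 : 𝒳 → ℝ} {ξ : (N : ℕ) → Fin N → Fin N → ℝ}
    {πr : (N : ℕ) → Fin N → ℕ → 𝒳 → 𝒰 → ℝ} {G : (N : ℕ) → Fin N → ℕ → 𝒳 → ℝ}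
    (h : Tendsto (fun N : ℕ => (N : ℝ)⁻¹ * ∑ i, nbhdError T P μ0 (ξ N) (πr N) (G N) i)
      atTop (𝓝 0)) :
    Tendsto (fun N => systemError T P μ0 (ξ N) (πr N) (G N)) atTop (𝓝 0) := by
  have hsqrt : Tendsto (fun N : ℕ => (√N)⁻¹) atTop (𝓝 0) :=
    tendsto_inv_atTop_zero.comp (Real.tendsto_sqrt_atTop.comp tendsto_natCast_atTop_atTop)
  simpa only [systemError, add_zero] using hsqrt.add h

theorem approximate_nash_general
    {𝒳 𝒰 : Type*} [Fintype 𝒳] [DecidableEq 𝒳] [Fintype 𝒰] (T : ℕ)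
    {μ0 : 𝒳 → ℝ} (hμ0 : μ0 ∈ simplex 𝒳)
    {P : 𝒳 → 𝒰 → (𝒳 → ℝ) → 𝒳 → ℝ} (hP : IsKernel P) {r : 𝒳 → 𝒰 → (𝒳 → ℝ) → ℝ} {Lr LP : ℝ}
    (hrLip : RewardLipschitz r Lr) (hPLip : KernelLipschitz P LP)
    {W : ℝ → ℝ → ℝ} (hW : Measurable (Function.uncurry W))
    (hW01 : ∀ a b, W a b ∈ Set.Icc (0 : ℝ) 1)
    (hWcont : ∀ᵐ α ∂volume.restrict (Set.Ioc (0 : ℝ) 1),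
      ∀ᵐ β ∂volume.restrict (Set.Ioc (0 : ℝ) 1),
        ContinuousWithinAt (fun a => W a β) (Set.Ioc 0 1) α)
    {ξ : (N : ℕ) → Fin N → Fin N → ℝ} (hξ : ∀ N i j, ξ N i j ∈ Set.Icc (0 : ℝ) 1)
    (hWconv : OpConvergesTo (fun N => stepGraphon (ξ N)) W)
    {πe : ℝ → ℕ → 𝒳 → 𝒰 → ℝ} {μ : ℕ → ℝ → 𝒳 → ℝ} (hGMFE : IsGMFE T W P r μ0 πe μ)
    (hπcont : ∀ t x u, ∀ᵐ α ∂volume.restrict (Set.Ioc (0 : ℝ) 1),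
      ContinuousWithinAt (fun a => πe a t x u) (Set.Ioc 0 1) α)
    {ε p : ℝ} (hε : 0 < ε) (hp : 0 < p) :
    ∃ N' : ℕ, ∀ N > N', ∃ Wset : Finset (Fin N),
      ⌊(1 - p) * (N : ℝ)⌋ ≤ (Wset.card : ℤ) ∧
      ∀ i ∈ Wset, ∀ πd : ℕ → 𝒳 → 𝒰 → ℝ, IsPolicy πd →
        JN T r P μ0 (ξ N) (Function.update (gammaN πe N) i πd) i - ε ≤
          JN T r P μ0 (ξ N) (gammaN πe N) i := by
  obtain ⟨C, hC, hgain⟩ := exists_JN_update_le hμ0 hP hPLip hrLip T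
  obtain ⟨-, hπ, hμ, hopt⟩ := hGMFE
  have hG (N : ℕ) (j : Fin N) (t : ℕ) : limitNbhd W μ N j t ∈ subProb 𝒳 :=
    nbhd_mem_subProb hW hW01 (hμ.1 t) (fun β hβ =>
      hμ.mem_simplex hμ0 hP hW hW01 hπ t β (Set.Ioc_subset_Icc_self hβ)) _
  have hrep (N : ℕ) (i : Fin N) : rep N i ∈ Set.Icc (0 : ℝ) 1 :=
    Set.Ioc_subset_Icc_self (rep_mem_Ioc i)
  obtain ⟨δ, hδ, hδε⟩ : ∃ δ > 0, C * (δ + δ) ≤ ε :=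
    ⟨ε / (2 * (C + 1)), by positivity, by field_simp; linarith⟩
  have hmean := hμ.tendsto_average_nbhdError hμ0 hP hPLip hW hW01 hWcont hξ hWconv hπ hπcont T
  obtain ⟨N', hN'⟩ := eventually_atTop.1 ((hmean.eventually_le_const (mul_pos hp hδ)).and
    ((tendsto_systemError hmean).eventually_le_const hδ))
  refine ⟨N', fun N hN => ⟨_, floor_le_card_filter_le nbhdError_nonneg hδ (hN' N hN.le).1,
    fun i hi πd hπd => ?_⟩⟩
  have hdev := hgain N (ξ N) (gammaN πe N) (limitNbhd W μ N) i πd (hξ N)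
    (fun j => hπ _ (hrep N j)) hπd (hG N) (hopt _ (hrep N i) πd hπd)
  refine sub_le_iff_le_add.2 (hdev.trans (add_le_add_right ?_ _))
  exact (mul_le_mul_of_nonneg_left (add_le_add (hN' N hN.le).2 (Finset.mem_filter.1 hi).2)
    hC).trans hδε

/-- approximate Nash property. Let (𝛑, 𝛍) be a GMFE with α ↦ π^α Lipschitz
up to finitely many discontinuities. Under Assumptions (W) and (Lip), for any ε, p > 0
there exists N' such that for all N > N', Γ_N(𝛑) is an (ε,p)-Markov–Nash equilibrium:
J^N_i(π¹,…,π^N) ≥ max_{π∈Π} J^N_i(π¹,…,π^{i−1},π,π^{i+1},…,π^N) − ε for all i in a set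
𝒲_N of at least ⌊(1−p)N⌋ agents. -/
theorem approximate_nash
    {𝒳 𝒰 : Type*} [Fintype 𝒳] [DecidableEq 𝒳] [Nonempty 𝒳] [Fintype 𝒰] [Nonempty 𝒰]
    (T : ℕ) (μ0 : 𝒳 → ℝ) (hμ0 : μ0 ∈ simplex 𝒳)
    (P : 𝒳 → 𝒰 → (𝒳 → ℝ) → 𝒳 → ℝ) (hP : IsKernel P)
    (r : 𝒳 → 𝒰 → (𝒳 → ℝ) → ℝ)
    (Lr LP LW : ℝ) (hrLip : RewardLipschitz r Lr) (hPLip : KernelLipschitz P LP)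
    (W : ℝ → ℝ → ℝ) (hW : IsGraphon W) (hWLip : GraphonLipschitz W LW)
    (ξ : (N : ℕ) → Fin N → Fin N → ℝ) (hξ : ∀ N, IsEdgeWeights (ξ N))
    (hWconv : OpConvergesTo (fun N => stepGraphon (ξ N)) W)
    (πe : ℝ → ℕ → 𝒳 → 𝒰 → ℝ) (μ : ℕ → ℝ → 𝒳 → ℝ)
    (hGMFE : IsGMFE T W P r μ0 πe μ)
    (hπeLip : EnsembleLipschitzUpTo πe)
    (ε p : ℝ) (hε : 0 < ε) (hp : 0 < p) :
    ∃ N' : ℕ, ∀ N > N', ∃ Wset : Finset (Fin N),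
      ⌊(1 - p) * (N : ℝ)⌋ ≤ (Wset.card : ℤ) ∧
      ∀ i ∈ Wset, ∀ πd : ℕ → 𝒳 → 𝒰 → ℝ, IsPolicy πd →
        JN T r P μ0 (ξ N) (Function.update (gammaN πe N) i πd) i - ε ≤
          JN T r P μ0 (ξ N) (gammaN πe N) i := by
  exact approximate_nash_general T hμ0 hP hrLip hPLip hW.1 hW.2.2 hWLip.ae_continuousWithinAt
    (fun N => (hξ N).mem_Icc) hWconv hGMFE hπeLip.ae_continuousWithinAt hε hp

end GMFG
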